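/- Let Ω ⊂ ℝⁿ be a bounded Lipschitz domain, let F ∈ C¹(ℝ^{N×n}) be convex with ν|z| − L ≤ F(z) ≤ L(1+|z|) for all z, and let T₀ ∈ L^∞(Ω;ℝ^{N×n}) satisfy ess inf_{x∈Ω} min_{|ξ|=1} (F^∞(ξ) − T₀(x)·ξ) > 0. Then the duality correspondence inf_{w ∈ W^{1,1}(Ω;ℝ^N)} ∫_Ω (F(∇w) − T₀·∇w) dx = sup_{χ ∈ L^∞_⊥(Ω;ℝ^{N×n})} ( −∫_Ω F*(T₀ + χ) dx ) holds; in particular, the dual problem admits a (unique) solution. -/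

import Mathlib

open MeasureTheory Filter Topology Set
open scoped ENNReal RealInnerProductSpace

noncomputable section

/-- Euclidean space `ℝⁿ`. -/
abbrev EVec (n : ℕ) := EuclideanSpace ℝ (Fin n)

/-- Frobenius inner product of two "matrices". -/
def mdot {ι κ : Type*} [Fintype ι] [Fintype κ] (A B : ι → κ → ℝ) : ℝ :=
  ∑ a, ∑ i, A a i * B a i

/-- Frobenius norm. -/
noncomputable def mnorm {ι κ : Type*} [Fintype ι] [Fintype κ] (A : ι → κ → ℝ) : ℝ :=
  Real.sqrt (mdot A A)

/-- Euclidean norm of a vector given as a tuple. -/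
noncomputable def vnorm {ι : Type*} [Fintype ι] (v : ι → ℝ) : ℝ :=
  Real.sqrt (∑ a, v a ^ 2)

/-- `Ω ⊆ ℝⁿ` is a (nonempty, open, connected) Lipschitz domain: every boundary point has
a neighbourhood on which `Ω` can be flattened to a half space by a bi-Lipschitz map. -/
def IsLipschitzDomain {n : ℕ} (Ω : Set (EVec n)) : Prop :=
  IsOpen Ω ∧ Ω.Nonempty ∧ IsConnected Ω ∧
  ∀ x ∈ frontier Ω, ∃ (U : Set (EVec n)) (h hinv : EVec n → EVec n) (K : NNReal)
      (e : EVec n),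
    ‖e‖ = 1 ∧ IsOpen U ∧ x ∈ U ∧ LipschitzOnWith K h U ∧
    LipschitzOnWith K hinv (h '' U) ∧ (∀ y ∈ U, hinv (h y) = y) ∧
    h '' (U ∩ Ω) = (h '' U) ∩ {y : EVec n | 0 < ⟪e, y⟫}

/-- `Du` is the weak (distributional) gradient of `u` on `Ω`, and both are integrable;
i.e. `u ∈ W^{1,1}(Ω; ℝ^ι)` with weak gradient `Du`. -/
def HasWeakDerivOn {n : ℕ} {ι : Type*} [Fintype ι] (Ω : Set (EVec n))
    (u : EVec n → ι → ℝ) (Du : EVec n → ι → Fin n → ℝ) : Prop :=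
  IntegrableOn u Ω volume ∧ IntegrableOn Du Ω volume ∧
  ∀ φ : EVec n → ℝ, ContDiff ℝ 1 φ → HasCompactSupport φ → tsupport φ ⊆ Ω →
    ∀ (a : ι) (i : Fin n),
      ∫ x in Ω, u x a * fderiv ℝ φ x (EuclideanSpace.single i 1) =
        - ∫ x in Ω, Du x a i * φ x

/-- `u ∈ W^{1,2}(Ω;ℝ^ι)` with weak gradient `Du`. -/
def MemW12 {n : ℕ} {ι : Type*} [Fintype ι] (Ω : Set (EVec n))
    (u : EVec n → ι → ℝ) (Du : EVec n → ι → Fin n → ℝ) : Prop :=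
  HasWeakDerivOn Ω u Du ∧ IntegrableOn (fun x => vnorm (u x) ^ 2) Ω volume ∧
    IntegrableOn (fun x => mnorm (Du x) ^ 2) Ω volume

/-- vanishing mean value `(u)_Ω = 0`. -/
def ZeroMean {n : ℕ} {ι : Type*} [Fintype ι] (Ω : Set (EVec n))
    (u : EVec n → ι → ℝ) : Prop :=
  ∀ a : ι, ∫ x in Ω, u x a = 0

/-- The `L^∞(Ω)` norm of a matrix field (w.r.t. the pointwise Frobenius norm). -/
noncomputable def linfNormOn {n N : ℕ} (Ω : Set (EVec n))
    (T : EVec n → Fin N → Fin n → ℝ) : ℝ≥0∞ :=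
  essSup (fun x => ENNReal.ofReal (mnorm (T x))) (volume.restrict Ω)

/-- `T ∈ W^{1,∞}(Ω)`: bounded and Lipschitz on `Ω`. -/
def MemW1inf {n N : ℕ} (Ω : Set (EVec n)) (T : EVec n → Fin N → Fin n → ℝ) : Prop :=
  ∃ C : NNReal, (∀ x ∈ Ω, ‖T x‖ ≤ C) ∧ LipschitzOnWith C T Ω

/-- `T ∈ W^{2,∞}(Ω)`: `T` is bounded with bounded Lipschitz derivative on `Ω`. -/
def MemW2inf {n N : ℕ} (Ω : Set (EVec n)) (T : EVec n → Fin N → Fin n → ℝ) : Prop :=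
  ∃ (C : NNReal) (DT : EVec n → EVec n →L[ℝ] (Fin N → Fin n → ℝ)),
    (∀ x ∈ Ω, ‖T x‖ ≤ C) ∧ (∀ x ∈ Ω, HasFDerivWithinAt T (DT x) Ω x) ∧
    (∀ x ∈ Ω, ‖DT x‖ ≤ C) ∧ LipschitzOnWith C DT Ω

/-- The nonlinear map `A(z) = f'(|z|) z / |z|` (equal to `0` at `z = 0`). -/
noncomputable def Amap {N n : ℕ} (f' : ℝ → ℝ) (z : Fin N → Fin n → ℝ) :
    Fin N → Fin n → ℝ :=
  fun a i => (f' (mnorm z) / mnorm z) * z a i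

/-- `u` is a weak solution of the Neumann problem for the integrand `f(|·|)` and datum `T₀`. -/
def IsWeakSolution {n N : ℕ} (Ω : Set (EVec n)) (f' : ℝ → ℝ)
    (T₀ : EVec n → Fin N → Fin n → ℝ)
    (u : EVec n → Fin N → ℝ) (Du : EVec n → Fin N → Fin n → ℝ) : Prop :=
  HasWeakDerivOn Ω u Du ∧
  ∀ φ Dφ, HasWeakDerivOn Ω φ Dφ →
    ∫ x in Ω, mdot (Amap f' (Du x)) (Dφ x) = ∫ x in Ω, mdot (T₀ x) (Dφ x)

/-- The functional `𝔉[w] = ∫_Ω (f(|∇w|) − T₀ · ∇w) dx` (as a function of the gradient). -/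
noncomputable def FF {n N : ℕ} (Ω : Set (EVec n)) (f : ℝ → ℝ)
    (T₀ : EVec n → Fin N → Fin n → ℝ) (Du : EVec n → Fin N → Fin n → ℝ) : ℝ :=
  ∫ x in Ω, (f (mnorm (Du x)) - mdot (T₀ x) (Du x))

/-- The regularised functional `𝔉_k[w] = 𝔉[w] + (2k)⁻¹ ∫_Ω |∇w|² dx`. -/
noncomputable def FFk {n N : ℕ} (Ω : Set (EVec n)) (f : ℝ → ℝ)
    (T₀ : EVec n → Fin N → Fin n → ℝ) (k : ℕ)
    (Du : EVec n → Fin N → Fin n → ℝ) : ℝ :=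
  FF Ω f T₀ Du + (2 * (k : ℝ))⁻¹ * ∫ x in Ω, mnorm (Du x) ^ 2

end

/-- The functional `𝓕[w] = ∫_Ω (F(∇w) − T₀·∇w) dx` for a general integrand `F`. -/
noncomputable def FFgen {n N : ℕ} (Ω : Set (EVec n)) (F : (Fin N → Fin n → ℝ) → ℝ)
    (T₀ : EVec n → Fin N → Fin n → ℝ) (Du : EVec n → Fin N → Fin n → ℝ) : ℝ :=
  ∫ x in Ω, (F (Du x) - mdot (T₀ x) (Du x))

/-- The elementary matrix with a `1` in position `(a,i)`. -/
def basisMat {N n : ℕ} (a : Fin N) (i : Fin n) : Fin N → Fin n → ℝ :=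
  fun a' i' => if a' = a ∧ i' = i then 1 else 0

/-- The gradient `D_z F(z)` of `F : ℝ^{N×n} → ℝ`, as a matrix. -/
noncomputable def DFmat {N n : ℕ} (F : (Fin N → Fin n → ℝ) → ℝ)
    (z : Fin N → Fin n → ℝ) : Fin N → Fin n → ℝ :=
  fun a i => fderiv ℝ F z (basisMat a i)

/-- `χ ∈ L^∞_⊥(Ω;ℝ^{N×n})`: a bounded measurable matrix field which annihilates all
`W^{1,1}`-gradients. -/
def MemLinfPerp {n N : ℕ} (Ω : Set (EVec n)) (χ : EVec n → Fin N → Fin n → ℝ) : Prop :=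
  AEStronglyMeasurable χ (volume.restrict Ω) ∧ (∃ C : ℝ, ∀ x ∈ Ω, mnorm (χ x) ≤ C) ∧
  ∀ (w : EVec n → Fin N → ℝ) (Dw : EVec n → Fin N → Fin n → ℝ),
    HasWeakDerivOn Ω w Dw → ∫ x in Ω, mdot (χ x) (Dw x) = 0

/-- The shifted convex conjugate `F*(z*) + F(0) = sup_w (z*·w − F(w) + F(0)) ∈ [0,∞]`,
valued in `ℝ≥0∞` so that infeasible points (`F*(z*) = ∞`) are handled correctly. -/
noncomputable def FstarShift {N n : ℕ} (F : (Fin N → Fin n → ℝ) → ℝ)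
    (z : Fin N → Fin n → ℝ) : ℝ≥0∞ :=
  ⨆ w : Fin N → Fin n → ℝ, ENNReal.ofReal (mdot z w - F w + F 0)

/-- The dual functional `ℛ_{T₀}[χ] = −∫_Ω F*(T₀+χ) dx`, valued in `EReal` (it equals
`F(0)·|Ω| − ∫_Ω (F*(T₀+χ) + F(0)) dx`, where the last integrand is nonnegative and the
value is `−∞` if `F*(T₀+χ)` is not integrable). -/
noncomputable def Rdual {n N : ℕ} (Ω : Set (EVec n)) (F : (Fin N → Fin n → ℝ) → ℝ)
    (T₀ χ : EVec n → Fin N → Fin n → ℝ) : EReal :=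
  ((F 0 * (volume Ω).toReal : ℝ) : EReal) -
    ((∫⁻ x in Ω, FstarShift F (T₀ x + χ x) : ℝ≥0∞) : EReal)

/-!
Write the primal energy as a function of `G = ∇w` in the subspace `V` of gradients in `L¹`. It is
convex and continuous on `L¹` and bounded below on `V`, so by Hahn-Banach it has an affine minorant
`G ↦ m + ∫ χ·G` with `m = inf` and `χ ∈ V^⊥`; since `(L¹)* = L^∞`, `χ` is a bounded field. This
minorant says `∫ ((T₀ + χ)·G - F(G)) ≤ -m` for every `G ∈ L¹`, and choosing `G` by a measurable
selection of near maximizers turns the left side into `∫ F*(T₀ + χ)`. Hence `χ` is a dual maximizer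
with value `m`.

For uniqueness, coercivity bounds a minimizing sequence in `L¹`, so almost everywhere a subsequence
of its values converges. The Fenchel gaps of any dual maximizer along the sequence tend to `0` in
`L¹`, so at the limit point `z` the maximizer satisfies `T₀ + χ = DF(z)`, whichever maximizer it is.
-/

theorem eq_zero_of_bddBelow_on_submodule {X : Type*} [AddCommGroup X] [Module ℝ X]
    {V : Submodule ℝ X} {g : X →ₗ[ℝ] ℝ} {a : ℝ} (hg : ∀ v ∈ V, a ≤ g v) {v : X} (hv : v ∈ V) :
    g v = 0 := by
  by_contra hne
  have hle := hg (((a - 1) / g v) • v) (V.smul_mem _ hv)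
  rw [map_smul, smul_eq_mul, div_mul_cancel₀ _ hne] at hle
  linarith

theorem exists_dual_affine_minorant {X : Type*} [AddCommGroup X] [Module ℝ X]
    [TopologicalSpace X] [IsTopologicalAddGroup X] [ContinuousSMul ℝ X] {V : Submodule ℝ X}
    {J : X → ℝ} (hJ : ConvexOn ℝ univ J) (hJc : Continuous J) {m : ℝ} (hm : ∀ v ∈ V, m ≤ J v) :
    ∃ l : X →L[ℝ] ℝ, (∀ v ∈ V, l v = 0) ∧ ∀ x, m + l x ≤ J x := by
  have hopen : IsOpen {p : X × ℝ | J p.1 < p.2} :=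
    isOpen_lt (hJc.comp continuous_fst) continuous_snd
  have hconv : Convex ℝ {p : X × ℝ | J p.1 < p.2} := by
    simpa using hJ.convex_strict_epigraph
  have hdisj : Disjoint {p : X × ℝ | J p.1 < p.2} ((V : Set X) ×ˢ {m}) := by
    rw [Set.disjoint_left]
    rintro ⟨v, t⟩ hlt ⟨hv, rfl⟩
    exact (hm v hv).not_gt hlt
  obtain ⟨f, u, hf_lt, hf_ge⟩ :=
    geometric_hahn_banach_open hconv hopen (V.convex.prod (convex_singleton m)) hdisj
  obtain ⟨g, c, hf⟩ : ∃ (g : X →L[ℝ] ℝ) (c : ℝ), ∀ x t, f (x, t) = g x + c * t := by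
    refine ⟨f.comp (.inl ℝ X ℝ), f (0, 1), fun x t ↦ ?_⟩
    rw [show ((x, t) : X × ℝ) = (x, 0) + t • (0, 1) by simp, map_add, map_smul, smul_eq_mul,
      mul_comm t]
    rfl
  have hgV : ∀ v ∈ V, u - c * m ≤ g v := fun v hv ↦ by
    linarith [hf v m, hf_ge (v, m) ⟨hv, rfl⟩]
  have hu : u ≤ c * m := by simpa using hgV 0 V.zero_mem
  have hgJ : ∀ x t, J x < t → g x + c * t < c * m := fun x t hxt ↦
    (hf x t ▸ hf_lt (x, t) hxt).trans_le hu
  have hc : c < 0 := by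
    have h0 := hgJ 0 (J 0 + 1) (lt_add_one _)
    rw [map_zero, zero_add] at h0
    nlinarith [hm 0 V.zero_mem]
  refine ⟨-(c⁻¹ • g), fun v hv ↦ ?_, fun x ↦ le_of_forall_gt_imp_ge_of_dense fun t ht ↦ ?_⟩
  · have hgv : g v = 0 := eq_zero_of_bddBelow_on_submodule (g := g.toLinearMap) hgV hv
    simp [hgv]
  · have hdiv : m + (-(c⁻¹ • g)) x = (c * m - g x) / c := by
      rw [sub_div, mul_div_cancel_left₀ _ hc.ne, div_eq_inv_mul, sub_eq_add_neg]
      rfl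
    rw [hdiv, div_le_iff_of_neg hc]
    linarith [hgJ x t ht]

section DualOfL1

variable {α : Type*} [MeasurableSpace α] {μ : Measure α} [IsFiniteMeasure μ]
  {H : Type*} [NormedAddCommGroup H] [InnerProductSpace ℝ H]

theorem exists_forall_indicatorConstLp_eq_setIntegral_inner [CompleteSpace H]
    (l : Lp H 1 μ →L[ℝ] ℝ) :
    ∃ h : Lp H 2 μ, ∀ {s : Set α} (hs : MeasurableSet s) (c : H),
      l (indicatorConstLp 1 hs (measure_ne_top μ s) c) = ∫ x in s, ⟪c, h x⟫ ∂μ := by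
  let ι : Lp H 2 μ →L[ℝ] Lp H 1 μ :=
    (ContinuousLinearMap.lsmul ℝ ℝ).holderL μ 2 2 1 (Lp.const 2 μ 1)
  have hι : ∀ f : Lp H 2 μ, ι f =ᵐ[μ] f := fun f ↦ by
    filter_upwards [(ContinuousLinearMap.lsmul ℝ ℝ (E := H)).coeFn_holder (r := 1)
      (Lp.const 2 μ 1) f, Lp.coeFn_const 2 μ (1 : ℝ)] with x hx hone
    rw [hone] at hx
    exact hx.trans (one_smul ℝ (f x))
  refine ⟨(InnerProductSpace.toDual ℝ _).symm (l ∘L ι), fun {s} hs c ↦ ?_⟩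
  rw [← L2.inner_indicatorConstLp_eq_setIntegral_inner ℝ _ hs c (measure_ne_top μ s),
    real_inner_comm, InnerProductSpace.toDual_symm_apply, ContinuousLinearMap.comp_apply]
  congr 1
  exact Lp.ext (indicatorConstLp_coeFn.trans (indicatorConstLp_coeFn.symm.trans (hι _).symm))

theorem ae_norm_le_of_forall_setIntegral_inner_le [SecondCountableTopology H] {h : α → H}
    (hh : Integrable h μ) {C : ℝ} (hC₀ : 0 ≤ C)
    (hC : ∀ c s, MeasurableSet s → ∫ x in s, ⟪c, h x⟫ ∂μ ≤ C * ‖c‖ * μ.real s) :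
    ∀ᵐ x ∂μ, ‖h x‖ ≤ C := by
  have hinner : ∀ c : H, ∀ᵐ x ∂μ, ⟪c, h x⟫ ≤ C * ‖c‖ := fun c ↦ by
    refine ae_le_of_forall_setIntegral_le (hh.const_inner c) (integrable_const _) fun s hs _ ↦ ?_
    rw [setIntegral_const, smul_eq_mul, mul_comm]
    exact hC c s hs
  filter_upwards [ae_all_iff.2 fun k ↦ hinner (TopologicalSpace.denseSeq H k)] with x hx
  have hclosed : IsClosed {c : H | ⟪c, h x⟫ ≤ C * ‖c‖} := isClosed_le (by fun_prop) (by fun_prop)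
  have hself : ⟪h x, h x⟫ ≤ C * ‖h x‖ :=
    hclosed.closure_subset_iff.2 (range_subset_iff.2 hx)
      (TopologicalSpace.denseRange_denseSeq H (h x))
  rw [real_inner_self_eq_norm_mul_norm] at hself
  by_contra! hlt
  nlinarith [hC₀.trans_lt hlt]

theorem exists_memLp_top_forall_eq_integral_inner [CompleteSpace H] [SecondCountableTopology H]
    (l : Lp H 1 μ →L[ℝ] ℝ) :
    ∃ h : α → H, MemLp h ∞ μ ∧ ∀ f : Lp H 1 μ, l f = ∫ x, ⟪h x, f x⟫ ∂μ := by
  obtain ⟨h, hl⟩ := exists_forall_indicatorConstLp_eq_setIntegral_inner l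
  have hbound : ∀ᵐ x ∂μ, ‖h x‖ ≤ ‖l‖ := by
    refine ae_norm_le_of_forall_setIntegral_inner_le ((Lp.memLp h).integrable one_le_two)
      (norm_nonneg l) fun c s hs ↦ ?_
    calc ∫ x in s, ⟪c, h x⟫ ∂μ ≤ ‖l (indicatorConstLp 1 hs (measure_ne_top μ s) c)‖ :=
          hl hs c ▸ le_abs_self _
      _ ≤ ‖l‖ * ‖indicatorConstLp 1 hs (measure_ne_top μ s) c‖ := l.le_opNorm _
      _ = ‖l‖ * ‖c‖ * μ.real s := by
          rw [norm_indicatorConstLp one_ne_zero ENNReal.one_ne_top]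
          simp [mul_assoc]
  have hmem : MemLp h ∞ μ := memLp_top_of_bound (Lp.aestronglyMeasurable h) ‖l‖ hbound
  let pairing : Lp H 1 μ →L[ℝ] ℝ := (innerSL ℝ).lpPairing μ ∞ 1 hmem.toLp
  have hpairing : ∀ f : Lp H 1 μ, pairing f = ∫ x, ⟪h x, f x⟫ ∂μ := fun f ↦ by
    refine (ContinuousLinearMap.lpPairing_eq_integral _ _ _).trans (integral_congr_ae ?_)
    filter_upwards [hmem.coeFn_toLp] with x hx
    rw [hx, innerSL_apply_apply]
  refine ⟨h, hmem, fun f ↦ (hpairing f).symm ▸ ?_⟩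
  induction f using Lp.induction ENNReal.one_ne_top with
  | @indicatorConst c s hs hμs =>
    rw [Lp.simpleFunc.coe_indicatorConst, hl hs, hpairing, ← integral_indicator hs]
    refine integral_congr_ae ?_
    filter_upwards [indicatorConstLp_coeFn (p := 1) (hs := hs) (hμs := hμs.ne) (c := c)]
      with x hx
    rw [hx]
    by_cases hxs : x ∈ s <;> simp [hxs, real_inner_comm]
  | add hf hg _ ihf ihg => rw [map_add, map_add, ihf, ihg]
  | isClosed => exact isClosed_eq l.continuous pairing.continuous

theorem exists_memLp_top_forall_eq_integral {E : Type*} [NormedAddCommGroup E] [NormedSpace ℝ E]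
    [FiniteDimensional ℝ E] (l : Lp E 1 μ →L[ℝ] ℝ) :
    ∃ χ : α → StrongDual ℝ E, MemLp χ ∞ μ ∧ ∀ f : Lp E 1 μ, l f = ∫ x, χ x (f x) ∂μ := by
  let Φ : E ≃L[ℝ] EuclideanSpace ℝ (Fin (Module.finrank ℝ E)) := toEuclidean
  obtain ⟨h, hmem, hl⟩ := exists_memLp_top_forall_eq_integral_inner
    (l ∘L Φ.symm.toContinuousLinearMap.compLpL 1 μ)
  let B : EuclideanSpace ℝ (Fin (Module.finrank ℝ E)) →L[ℝ] StrongDual ℝ E :=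
    (innerSL ℝ).bilinearComp (.id ℝ _) Φ.toContinuousLinearMap
  refine ⟨fun x ↦ B (h x), B.comp_memLp' hmem, fun f ↦ ?_⟩
  set g : Lp (EuclideanSpace ℝ (Fin (Module.finrank ℝ E))) 1 μ :=
    Φ.toContinuousLinearMap.compLpL 1 μ f
  have hg : g =ᵐ[μ] fun x ↦ Φ (f x) := ContinuousLinearMap.coeFn_compLpL _ f
  have hf : Φ.symm.toContinuousLinearMap.compLpL 1 μ g = f := by
    refine Lp.ext ((ContinuousLinearMap.coeFn_compLpL _ g).trans ?_)
    filter_upwards [hg] with x hx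
    simp [hx]
  calc l f = ∫ x, ⟪h x, g x⟫ ∂μ := by rw [← hl, ContinuousLinearMap.comp_apply, hf]
    _ = ∫ x, B (h x) (f x) ∂μ := by
      refine integral_congr_ae ?_
      filter_upwards [hg] with x hx
      simp [B, hx]

end DualOfL1

theorem exists_stronglyMeasurable_norm_le_ae_eq_of_memLp_top {α G : Type*} [MeasurableSpace α]
    {μ : Measure α} [NormedAddCommGroup G] {f : α → G} (hf : MemLp f ∞ μ) :
    ∃ (g : α → G) (C : ℝ), StronglyMeasurable g ∧ (∀ x, ‖g x‖ ≤ C) ∧ g =ᵐ[μ] f := by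
  set C : ℝ := (eLpNormEssSup f μ).toReal
  have hC : ∀ᵐ x ∂μ, ‖f x‖ ≤ C := by
    filter_upwards [ae_le_eLpNormEssSup (f := f) (μ := μ)] with x hx
    rw [← toReal_enorm]
    exact ENNReal.toReal_mono (eLpNorm_exponent_top (f := f) ▸ hf.eLpNorm_ne_top) hx
  have hmeas := hf.1.stronglyMeasurable_mk
  refine ⟨{x | ‖hf.1.mk f x‖ ≤ C}.indicator (hf.1.mk f), C,
    hmeas.indicator (measurableSet_le hmeas.norm.measurable measurable_const), fun x ↦ ?_, ?_⟩
  · rw [norm_indicator_eq_indicator_norm]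
    exact Set.indicator_apply_le' id fun _ ↦ ENNReal.toReal_nonneg
  · filter_upwards [hf.1.ae_eq_mk, hC] with x hmk hle
    rw [hmk] at hle
    rw [hmk, Set.indicator_of_mem (show x ∈ {x | ‖hf.1.mk f x‖ ≤ C} from hle)]

section LinearGrowth

open scoped NNReal

variable {E : Type*} [NormedAddCommGroup E] [NormedSpace ℝ E] {F Finf : E → ℝ} {K : ℝ≥0}

theorem lipschitzWith_of_convexOn_of_le_add_mul_norm (hF : ConvexOn ℝ univ F) {a : ℝ}
    (hgrowth : ∀ z, F z ≤ a + K * ‖z‖) : LipschitzWith K F := by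
  refine LipschitzWith.of_le_add_mul K fun w z ↦ ?_
  -- `w = (1 - s⁻¹) z + s⁻¹ (z + s (w - z))`: use convexity and growth, then let `s → ∞`.
  have hlarge : ∀ s : ℝ, 1 ≤ s →
      F w ≤ F z + K * dist w z + s⁻¹ * (a + K * ‖z‖ - F z) := fun s hs ↦ by
    have hs₀ : 0 < s := one_pos.trans_le hs
    have hconv := hF.2 (mem_univ z) (mem_univ (z + s • (w - z)))
      (sub_nonneg.2 (inv_le_one_of_one_le₀ hs)) (inv_nonneg.2 hs₀.le) (sub_add_cancel 1 s⁻¹)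
    have hw : (1 - s⁻¹) • z + s⁻¹ • (z + s • (w - z)) = w := by
      rw [smul_add, smul_smul, inv_mul_cancel₀ hs₀.ne']
      module
    have hnorm : ‖z + s • (w - z)‖ ≤ ‖z‖ + s * dist w z := by
      refine (norm_add_le _ _).trans_eq ?_
      rw [norm_smul, Real.norm_of_nonneg hs₀.le, dist_eq_norm]
    have hfar : F (z + s • (w - z)) ≤ a + K * (‖z‖ + s * dist w z) :=
      (hgrowth _).trans (by gcongr)
    calc F w ≤ (1 - s⁻¹) * F z + s⁻¹ * F (z + s • (w - z)) := by
          simpa only [hw, smul_eq_mul] using hconv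
      _ ≤ (1 - s⁻¹) * F z + s⁻¹ * (a + K * (‖z‖ + s * dist w z)) := by gcongr
      _ = F z + K * dist w z + s⁻¹ * (a + K * ‖z‖ - F z) := by
          field_simp
          ring
  have hlim : Tendsto (fun s : ℝ ↦ F z + K * dist w z + s⁻¹ * (a + K * ‖z‖ - F z)) atTop
      (𝓝 (F z + K * dist w z)) := by
    simpa using (tendsto_inv_atTop_zero.mul_const (a + K * ‖z‖ - F z)).const_add
      (F z + K * dist w z)
  exact ge_of_tendsto hlim ((eventually_ge_atTop 1).mono hlarge)

/-- `Finf` is the recession function `F^∞(z) = lim_{t ↘ 0} t F(z / t)` of `F`. -/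
def IsRecessionFunction (F Finf : E → ℝ) : Prop :=
  ∀ z, Tendsto (fun t : ℝ ↦ t * F (t⁻¹ • z)) (𝓝[>] 0) (𝓝 (Finf z))

theorem lipschitzWith_mul_comp_inv_smul (hF : LipschitzWith K F) {t : ℝ} (ht : 0 < t) :
    LipschitzWith K fun z ↦ t * F (t⁻¹ • z) := by
  refine LipschitzWith.of_le_add_mul K fun z w ↦ ?_
  have hle := hF.le_add_mul (t⁻¹ • z) (t⁻¹ • w)
  rw [dist_smul₀, Real.norm_of_nonneg (inv_nonneg.2 ht.le)] at hle
  calc t * F (t⁻¹ • z) ≤ t * (F (t⁻¹ • w) + K * (t⁻¹ * dist z w)) := by gcongr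
    _ = t * F (t⁻¹ • w) + K * dist z w := by field_simp

namespace IsRecessionFunction

theorem lipschitzWith (h : IsRecessionFunction F Finf) (hF : LipschitzWith K F) :
    LipschitzWith K Finf :=
  LipschitzWith.of_le_add_mul K fun z w ↦
    le_of_tendsto_of_tendsto (h z) ((h w).add_const _) <|
      eventually_mem_nhdsWithin.mono fun _ ht ↦
        (lipschitzWith_mul_comp_inv_smul hF ht).le_add_mul z w

theorem map_zero (h : IsRecessionFunction F Finf) : Finf 0 = 0 := by
  refine tendsto_nhds_unique (h 0) ?_
  simpa using (tendsto_nhdsWithin_of_tendsto_nhds (tendsto_id (x := 𝓝 (0 : ℝ)))).mul_const (F 0)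

theorem map_smul (h : IsRecessionFunction F Finf) {r : ℝ} (hr : 0 < r) (z : E) :
    Finf (r • z) = r * Finf z := by
  have hscale : Tendsto (fun t : ℝ ↦ r⁻¹ * t) (𝓝[>] 0) (𝓝[>] 0) :=
    tendsto_iff_comap.2 (comap_mulLeft_nhdsGT_zero (inv_pos.2 hr)).ge
  refine tendsto_nhds_unique (h (r • z)) ((((h z).comp hscale).const_mul r).congr fun t ↦ ?_)
  simp only [Function.comp_apply, mul_inv, inv_inv, smul_smul]
  field_simp

theorem eventually_sub_le_mul [FiniteDimensional ℝ E] (h : IsRecessionFunction F Finf)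
    (hF : LipschitzWith K F) {ε : ℝ} (hε : 0 < ε) :
    ∀ᶠ t in 𝓝[>] (0 : ℝ), ∀ ξ, ‖ξ‖ ≤ 1 → Finf ξ - ε ≤ t * F (t⁻¹ • ξ) := by
  have hlocal : ∀ ξ ∈ Metric.closedBall (0 : E) 1,
      ∀ᶠ p in 𝓝[>] (0 : ℝ) ×ˢ 𝓝 ξ, Finf p.2 - ε ≤ p.1 * F (p.1⁻¹ • p.2) := fun ξ _ ↦ by
    have hnear : Tendsto (fun η ↦ 2 * (K * dist η ξ)) (𝓝 ξ) (𝓝 0) := by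
      have hcont : Continuous fun η ↦ 2 * (K * dist η ξ) := by fun_prop
      simpa using hcont.tendsto ξ
    have hpointwise := (h ξ).eventually (lt_mem_nhds (sub_lt_self (Finf ξ) (half_pos hε)))
    filter_upwards [(hpointwise.and eventually_mem_nhdsWithin).prod_mk
      (hnear.eventually (gt_mem_nhds (half_pos hε)))] with ⟨t, η⟩ ⟨⟨hlt, ht⟩, hdist⟩
    have hFinf := (h.lipschitzWith hF).le_add_mul η ξ
    have hFt := (lipschitzWith_mul_comp_inv_smul hF ht).le_add_mul ξ η
    rw [dist_comm ξ η] at hFt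
    linarith
  have huniform : ∀ᶠ p in 𝓝[>] (0 : ℝ) ×ˢ 𝓝ˢ (Metric.closedBall (0 : E) 1),
      Finf p.2 - ε ≤ p.1 * F (p.1⁻¹ • p.2) :=
    (isCompact_closedBall 0 1).mem_prod_nhdsSet_of_forall hlocal
  exact huniform.curry.mono fun t ht ξ hξ ↦
    ht.self_of_nhdsSet ξ (mem_closedBall_zero_iff.2 hξ)

theorem exists_forall_sub_le [FiniteDimensional ℝ E] (h : IsRecessionFunction F Finf)
    (hF : LipschitzWith K F) {ε : ℝ} (hε : 0 < ε) :
    ∃ C, ∀ z, Finf z - ε * ‖z‖ - C ≤ F z := by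
  obtain ⟨r, hr, hlarge⟩ := mem_nhdsGT_iff_exists_Ioo_subset.1 (h.eventually_sub_le_mul hF hε)
  rw [mem_Ioi] at hr
  refine ⟨2 * K * r⁻¹ + |F 0|, fun z ↦ ?_⟩
  rcases le_or_gt ‖z‖ r⁻¹ with hz | hz
  · have hFinf := (h.lipschitzWith hF).le_add_mul z 0
    have hFz := hF.le_add_mul 0 z
    rw [h.map_zero, dist_zero_right] at hFinf
    rw [dist_zero_left] at hFz
    have : K * ‖z‖ ≤ K * r⁻¹ := by gcongr
    have := mul_nonneg hε.le (norm_nonneg z)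
    linarith [neg_abs_le (F 0)]
  · have hpos : 0 < ‖z‖ := (inv_pos.2 hr).trans hz
    have hunit : ‖‖z‖⁻¹ • z‖ ≤ 1 := by rw [norm_smul, norm_inv, norm_norm, inv_mul_cancel₀ hpos.ne']
    have hle : Finf (‖z‖⁻¹ • z) - ε ≤ ‖z‖⁻¹ * F (‖z‖⁻¹⁻¹ • ‖z‖⁻¹ • z) :=
      hlarge ⟨inv_pos.2 hpos, inv_lt_of_inv_lt₀ hr hz⟩ _ hunit
    rw [inv_inv, smul_inv_smul₀ hpos.ne', h.map_smul (inv_pos.2 hpos), le_inv_mul_iff₀ hpos,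
      mul_sub, mul_inv_cancel_left₀ hpos.ne'] at hle
    have : 0 ≤ 2 * K * r⁻¹ + |F 0| := by positivity
    linarith

theorem exists_forall_mul_norm_sub_le [FiniteDimensional ℝ E] (h : IsRecessionFunction F Finf)
    (hF : LipschitzWith K F) {δ : ℝ} (hδ : 0 < δ) :
    ∃ C, ∀ ℓ : StrongDual ℝ E, (∀ ξ, δ * ‖ξ‖ ≤ Finf ξ - ℓ ξ) →
      ∀ z, δ / 2 * ‖z‖ - C ≤ F z - ℓ z := by
  obtain ⟨C, hC⟩ := h.exists_forall_sub_le hF (half_pos hδ)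
  exact ⟨C, fun ℓ hℓ z ↦ by linarith [hC z, hℓ z]⟩

theorem norm_le_of_forall_apply_le (h : IsRecessionFunction F Finf) (hF : LipschitzWith K F)
    {ℓ : StrongDual ℝ E} (hℓ : ∀ ξ, ℓ ξ ≤ Finf ξ) : ‖ℓ‖ ≤ K := by
  have hle : ∀ ξ, ℓ ξ ≤ K * ‖ξ‖ := fun ξ ↦ by
    simpa [h.map_zero] using (hℓ ξ).trans ((h.lipschitzWith hF).le_add_mul ξ 0)
  exact ℓ.opNorm_le_bound K.2 fun ξ ↦
    abs_le'.2 ⟨hle ξ, by simpa using hle (-ξ)⟩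

theorem memLp_top_of_ae_forall_apply_le (h : IsRecessionFunction F Finf) (hF : LipschitzWith K F)
    {α : Type*} [MeasurableSpace α] {μ : Measure α} {T : α → StrongDual ℝ E}
    (hT : AEStronglyMeasurable T μ) (hle : ∀ᵐ x ∂μ, ∀ ξ, T x ξ ≤ Finf ξ) : MemLp T ∞ μ :=
  memLp_top_of_bound hT K (hle.mono fun _ hx ↦ h.norm_le_of_forall_apply_le hF hx)

end IsRecessionFunction

end LinearGrowth

section ShiftedConjugate

open scoped NNReal

theorem integrable_lipschitz_comp {α X : Type*} [MeasurableSpace α] {μ : Measure α}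
    [IsFiniteMeasure μ] [NormedAddCommGroup X] {F : X → ℝ} {K : ℝ≥0} {G : α → X}
    (hF : LipschitzWith K F) (hG : Integrable G μ) : Integrable (fun x ↦ F (G x)) μ := by
  refine ((integrable_const |F 0|).add (hG.norm.const_mul K)).mono'
    (hF.continuous.comp_aestronglyMeasurable hG.1) (.of_forall fun x ↦ ?_)
  have hdist := hF.dist_le_mul (G x) 0
  rw [Real.dist_eq, dist_zero_right] at hdist
  have htriangle := abs_sub_abs_le_abs_sub (F (G x)) (F 0)
  simp only [Real.norm_eq_abs, Pi.add_apply]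
  linarith

variable {E : Type*} [NormedAddCommGroup E] [NormedSpace ℝ E] {F : E → ℝ}

/-- The convex conjugate `F*(ℓ) = sup_w (ℓ w - F w)`, shifted by `F 0` so that it is nonnegative
and can be encoded in `ℝ≥0∞`: the term `w = 0` of the supremum vanishes. -/
noncomputable def shiftedConj (F : E → ℝ) (ℓ : StrongDual ℝ E) : ℝ≥0∞ :=
  ⨆ w, ENNReal.ofReal (ℓ w - F w + F 0)

theorem ofReal_le_shiftedConj (ℓ : StrongDual ℝ E) (w : E) :
    ENNReal.ofReal (ℓ w - F w + F 0) ≤ shiftedConj F ℓ :=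
  le_iSup (fun w ↦ ENNReal.ofReal (ℓ w - F w + F 0)) w

theorem measurable_shiftedConj (F : E → ℝ) : Measurable (shiftedConj F) := by
  refine (lowerSemicontinuous_iSup fun w ↦ Continuous.lowerSemicontinuous ?_).measurable
  exact ENNReal.continuous_ofReal.comp (by fun_prop)

theorem shiftedConj_eq_iSup_of_denseRange (hF : Continuous F) {e : ℕ → E} (he : DenseRange e)
    (ℓ : StrongDual ℝ E) :
    shiftedConj F ℓ = ⨆ k, ENNReal.ofReal (ℓ (e k) - F (e k) + F 0) := by
  refine le_antisymm (iSup_le fun w ↦ ?_) (iSup_le fun k ↦ ofReal_le_shiftedConj ℓ (e k))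
  have hcont : Continuous fun w ↦ ENNReal.ofReal (ℓ w - F w + F 0) :=
    ENNReal.continuous_ofReal.comp (by fun_prop)
  exact he.induction_on w (isClosed_le hcont continuous_const)
    (le_iSup fun k ↦ ENNReal.ofReal (ℓ (e k) - F (e k) + F 0))

theorem exists_measurable_argmax {α : Type*} [MeasurableSpace α] {f : ℕ → α → ℝ}
    (hf : ∀ k, Measurable (f k)) (k : ℕ) :
    ∃ i : α → ℕ, Measurable i ∧ (∀ x, i x ≤ k) ∧ ∀ x, ∀ j ≤ k, f j x ≤ f (i x) x := by
  classical
  have hmax : ∀ x, ∃ i, i ≤ k ∧ ∀ j ≤ k, f j x ≤ f i x := fun x ↦ by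
    simpa using Finset.exists_max_image (Finset.Iic k) (f · x) ⟨0, by simp⟩
  have hmeas : ∀ i, MeasurableSet {x | i ≤ k ∧ ∀ j ≤ k, f j x ≤ f i x} := fun i ↦ by
    simp only [ofPred_and, ofPred_forall]
    refine (MeasurableSet.const _).inter ?_
    exact .iInter fun j ↦ .iInter fun _ ↦ measurableSet_le (hf j) (hf i)
  exact ⟨fun x ↦ Nat.find (hmax x), measurable_find hmax hmeas,
    fun x ↦ (Nat.find_spec (hmax x)).1, fun x ↦ (Nat.find_spec (hmax x)).2⟩

theorem exists_denseRange_apply_zero_eq_zero (X : Type*) [AddGroup X] [TopologicalSpace X]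
    [ContinuousAdd X] [TopologicalSpace.SeparableSpace X] :
    ∃ e : ℕ → X, DenseRange e ∧ e 0 = 0 := by
  let d := TopologicalSpace.denseSeq X
  refine ⟨fun k ↦ d k + -d 0, ?_, add_neg_cancel (d 0)⟩
  exact (Equiv.addRight (-d 0)).surjective.denseRange.comp
    (TopologicalSpace.denseRange_denseSeq X) (continuous_add_const _)

section Integral

variable {α : Type*} [MeasurableSpace α] {μ : Measure α} {K : ℝ≥0} {z : α → StrongDual ℝ E}
  {G : α → E}

theorem integrable_dual_apply (hz : MemLp z ∞ μ) (hG : Integrable G μ) :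
    Integrable (fun x ↦ z x (G x)) μ :=
  memLp_one_iff_integrable.1 <|
    (ContinuousLinearMap.id ℝ (StrongDual ℝ E)).memLp_of_bilin 1 hz (memLp_one_iff_integrable.2 hG)

variable [IsFiniteMeasure μ]

theorem integrable_fenchel (hF : LipschitzWith K F) (hz : MemLp z ∞ μ) (hG : Integrable G μ) :
    Integrable (fun x ↦ z x (G x) - F (G x) + F 0) μ :=
  ((integrable_dual_apply hz hG).sub (integrable_lipschitz_comp hF hG)).add (integrable_const _)

theorem exists_seq_integrable_monotone_iSup_eq_shiftedConj [TopologicalSpace.SeparableSpace E]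
    (hF : Continuous F) (hz : StronglyMeasurable z) :
    ∃ G : ℕ → α → E, (∀ k, Integrable (G k) μ) ∧ (∀ k x, 0 ≤ z x (G k x) - F (G k x) + F 0) ∧
      (∀ x, Monotone fun k ↦ z x (G k x) - F (G k x) + F 0) ∧
      ∀ x, shiftedConj F (z x) = ⨆ k, ENNReal.ofReal (z x (G k x) - F (G k x) + F 0) := by
  obtain ⟨e, he, he₀⟩ := exists_denseRange_apply_zero_eq_zero E
  have happly : ∀ w, Measurable fun x ↦ z x w := fun w ↦
    ((ContinuousLinearMap.apply ℝ ℝ w).continuous.comp_stronglyMeasurable hz).measurable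
  have hmeas : ∀ k, Measurable fun x ↦ z x (e k) - F (e k) + F 0 := fun k ↦
    ((happly (e k)).sub_const _).add_const _
  choose i hi hi_le hi_max using exists_measurable_argmax hmeas
  refine ⟨fun k x ↦ e (i k x), fun k ↦ ?_, fun k x ↦ ?_, fun x ↦ monotone_nat_of_le_succ fun k ↦ ?_,
    fun x ↦ ?_⟩
  · obtain ⟨C, hC⟩ := ((finite_Iic k).image fun j ↦ ‖e j‖).bddAbove
    refine .of_bound (StronglyMeasurable.aestronglyMeasurable ?_) C
      (.of_forall fun x ↦ hC (mem_image_of_mem _ (hi_le k x)))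
    exact StronglyMeasurable.of_discrete.comp_measurable (hi k)
  · simpa [he₀] using hi_max k x 0 k.zero_le
  · exact hi_max (k + 1) x (i k x) ((hi_le k x).trans k.le_succ)
  · rw [shiftedConj_eq_iSup_of_denseRange hF he]
    exact le_antisymm (iSup_mono fun k ↦ ENNReal.ofReal_le_ofReal (hi_max k x k le_rfl))
      (iSup_le fun k ↦ le_iSup (fun j ↦ ENNReal.ofReal (z x (e j) - F (e j) + F 0)) (i k x))

theorem lintegral_shiftedConj_le [TopologicalSpace.SeparableSpace E] (hF : LipschitzWith K F)
    (hz : MemLp z ∞ μ) {R : ℝ}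
    (hR : ∀ G, Integrable G μ → ∫ x, z x (G x) - F (G x) + F 0 ∂μ ≤ R) :
    ∫⁻ x, shiftedConj F (z x) ∂μ ≤ ENNReal.ofReal R := by
  have hz_ae := hz.1.ae_eq_mk
  obtain ⟨G, hG, hpos, hmono, hsup⟩ := exists_seq_integrable_monotone_iSup_eq_shiftedConj (μ := μ)
    hF.continuous hz.1.stronglyMeasurable_mk
  have hfenchel : ∀ k, Integrable (fun x ↦ hz.1.mk z x (G k x) - F (G k x) + F 0) μ := fun k ↦
    integrable_fenchel hF (hz.ae_eq hz_ae) (hG k)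
  calc ∫⁻ x, shiftedConj F (z x) ∂μ = ∫⁻ x, shiftedConj F (hz.1.mk z x) ∂μ :=
        lintegral_congr_ae (hz_ae.mono fun x hx ↦ congrArg (shiftedConj F) hx)
    _ = ⨆ k, ∫⁻ x, ENNReal.ofReal (hz.1.mk z x (G k x) - F (G k x) + F 0) ∂μ := by
        simp_rw [hsup]
        exact lintegral_iSup' (fun k ↦ (hfenchel k).1.aemeasurable.ennreal_ofReal)
          (.of_forall fun x ↦ ENNReal.ofReal_mono.comp (hmono x))
    _ ≤ ENNReal.ofReal R := iSup_le fun k ↦ by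
        rw [← ofReal_integral_eq_lintegral_ofReal (hfenchel k) (.of_forall (hpos k))]
        refine ENNReal.ofReal_le_ofReal (le_of_eq_of_le (integral_congr_ae ?_) (hR _ (hG k)))
        filter_upwards [hz_ae] with x hx
        rw [hx]

end Integral

end ShiftedConjugate

section Duality

open scoped NNReal

-- `MemLp.add` on `StrongDual ℝ E`-valued fields makes instance unification time out.
theorem memLp_fun_add {α X : Type*} [MeasurableSpace α] {μ : Measure α} [NormedAddCommGroup X]
    {p : ℝ≥0∞} {f g : α → X} (hf : MemLp f p μ) (hg : MemLp g p μ) :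
    MemLp (fun x ↦ f x + g x) p μ :=
  hf.add hg

theorem ofReal_integral_le_lintegral_ofReal {α : Type*} [MeasurableSpace α] {μ : Measure α}
    (f : α → ℝ) : ENNReal.ofReal (∫ x, f x ∂μ) ≤ ∫⁻ x, ENNReal.ofReal (f x) ∂μ := by
  by_cases hf : Integrable f μ
  · rw [integral_eq_lintegral_pos_part_sub_lintegral_neg_part hf]
    refine le_trans (ENNReal.ofReal_le_ofReal ?_) ENNReal.ofReal_toReal_le
    exact sub_le_self _ ENNReal.toReal_nonneg
  · simp [integral_undef hf]

variable {α E : Type*} [MeasurableSpace α] {μ : Measure α} [NormedAddCommGroup E]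
  [NormedSpace ℝ E] {F : E → ℝ} {K : ℝ≥0} {T χ : α → StrongDual ℝ E} {G : α → E}

/-- The primal functional `∫ (F(G) - T·G) dμ` of an integrable field `G`, with the datum `T`
encoded as a field of continuous linear functionals. -/
noncomputable def tiltedEnergy (μ : Measure α) (F : E → ℝ) (T : α → StrongDual ℝ E)
    (G : α → E) : ℝ :=
  ∫ x, F (G x) - T x (G x) ∂μ

theorem tiltedEnergy_congr_ae {H : α → E} (h : G =ᵐ[μ] H) :
    tiltedEnergy μ F T G = tiltedEnergy μ F T H :=
  integral_congr_ae <| h.mono fun x hx ↦ by simp only [hx]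

variable [IsFiniteMeasure μ]

theorem integrable_tiltedEnergy (hF : LipschitzWith K F) (hT : MemLp T ∞ μ)
    (hG : Integrable G μ) : Integrable (fun x ↦ F (G x) - T x (G x)) μ :=
  (integrable_lipschitz_comp hF hG).sub (integrable_dual_apply hT hG)

theorem integral_fenchel_eq (hF : LipschitzWith K F) (hT : MemLp T ∞ μ) (hχ : MemLp χ ∞ μ)
    (hG : Integrable G μ) :
    ∫ x, (T x + χ x) (G x) - F (G x) + F 0 ∂μ =
      ∫ x, χ x (G x) ∂μ - tiltedEnergy μ F T G + F 0 * μ.real univ := by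
  have hχG := integrable_dual_apply hχ hG
  have hTG := integrable_tiltedEnergy hF hT hG
  have hdiff : Integrable (fun x ↦ χ x (G x) - (F (G x) - T x (G x))) μ := hχG.sub hTG
  calc ∫ x, (T x + χ x) (G x) - F (G x) + F 0 ∂μ
      = ∫ x, χ x (G x) - (F (G x) - T x (G x)) + F 0 ∂μ := by
        refine integral_congr_ae (.of_forall fun x ↦ ?_)
        simp only [add_apply]
        ring
    _ = ∫ x, χ x (G x) ∂μ - tiltedEnergy μ F T G + F 0 * μ.real univ := by
        rw [integral_add hdiff (integrable_const _), integral_sub hχG hTG, integral_const,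
          smul_eq_mul, mul_comm, tiltedEnergy]

theorem convexOn_tiltedEnergy (hconv : ConvexOn ℝ univ F) (hF : LipschitzWith K F)
    (hT : MemLp T ∞ μ) : ConvexOn ℝ univ fun G : Lp E 1 μ ↦ tiltedEnergy μ F T G := by
  refine ⟨convex_univ, fun G _ H _ a b ha hb hab ↦ ?_⟩
  have hint : ∀ G : Lp E 1 μ, Integrable (fun x ↦ F (G x) - T x (G x)) μ := fun G ↦
    integrable_tiltedEnergy hF hT (L1.integrable_coeFn G)
  simp only [tiltedEnergy, smul_eq_mul]
  rw [← integral_const_mul, ← integral_const_mul,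
    ← integral_add ((hint G).const_mul a) ((hint H).const_mul b)]
  refine integral_mono_ae (hint _) (((hint G).const_mul a).add ((hint H).const_mul b)) ?_
  filter_upwards [Lp.coeFn_add (a • G) (b • H), Lp.coeFn_smul a G, Lp.coeFn_smul b H]
    with x hadd hsmulG hsmulH
  have hFx := hconv.2 (mem_univ (G x)) (mem_univ (H x)) ha hb hab
  simp only [hadd, hsmulG, hsmulH, Pi.add_apply, Pi.smul_apply, map_add, map_smul,
    smul_eq_mul] at hFx ⊢
  linarith

theorem continuous_tiltedEnergy (hF : LipschitzWith K F) (hT : MemLp T ∞ μ) :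
    Continuous fun G : Lp E 1 μ ↦ tiltedEnergy μ F T G := by
  obtain ⟨C, hC⟩ : ∃ C : ℝ≥0, ∀ᵐ x ∂μ, ‖T x‖₊ ≤ C :=
    ⟨_, (ae_le_eLpNormEssSup (f := T)).mono fun x hx ↦
      (ENNReal.le_toNNReal_of_coe_le hx (eLpNorm_exponent_top (f := T) ▸ hT.2.ne))⟩
  refine (LipschitzWith.of_le_add_mul (K + C) fun G H ↦ ?_).continuous
  have hint : ∀ G : Lp E 1 μ, Integrable (fun x ↦ F (G x) - T x (G x)) μ := fun G ↦
    integrable_tiltedEnergy hF hT (L1.integrable_coeFn G)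
  have hdist : Integrable (fun x ↦ dist (G x) (H x)) μ := by
    simpa only [dist_eq_norm, Pi.sub_apply] using
      ((L1.integrable_coeFn G).sub (L1.integrable_coeFn H)).norm
  rw [L1.dist_eq_integral_dist, ← integral_const_mul, tiltedEnergy, tiltedEnergy,
    ← integral_add (hint H) (hdist.const_mul _)]
  refine integral_mono_ae (hint G) ((hint H).add (hdist.const_mul _)) ?_
  filter_upwards [hC] with x hx
  have hlip : LipschitzWith (K + C) fun z ↦ F z - T x z :=
    hF.sub ((T x).lipschitz.weaken hx)
  exact hlip.le_add_mul (G x) (H x)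

theorem lintegral_shiftedConj_add_le [TopologicalSpace.SeparableSpace E] (hF : LipschitzWith K F)
    (hT : MemLp T ∞ μ) (hχ : MemLp χ ∞ μ) {m : ℝ}
    (hm : ∀ G, Integrable G μ → m + ∫ x, χ x (G x) ∂μ ≤ tiltedEnergy μ F T G) :
    ∫⁻ x, shiftedConj F (T x + χ x) ∂μ ≤ ENNReal.ofReal (F 0 * μ.real univ - m) := by
  refine lintegral_shiftedConj_le hF (memLp_fun_add hT hχ) fun G hG ↦ ?_
  linarith [hm G hG, integral_fenchel_eq hF hT hχ hG]

/-- `χ` is an `L^∞` field, viewed as a functional on `L¹`, that vanishes on the subspace `V`. For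
`V` the space of weak gradients this is `L^∞_⊥`. -/
structure IsBoundedAnnihilator (V : Submodule ℝ (Lp E 1 μ)) (χ : α → StrongDual ℝ E) : Prop where
  memLp : MemLp χ ∞ μ
  integral_eq_zero : ∀ G ∈ V, ∫ x, χ x (G x) ∂μ = 0

theorem IsBoundedAnnihilator.integral_fenchel_eq {V : Submodule ℝ (Lp E 1 μ)}
    (hχ : IsBoundedAnnihilator V χ) (hF : LipschitzWith K F) (hT : MemLp T ∞ μ) {G : Lp E 1 μ}
    (hG : G ∈ V) :
    ∫ x, (T x + χ x) (G x) - F (G x) + F 0 ∂μ = F 0 * μ.real univ - tiltedEnergy μ F T G := by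
  rw [_root_.integral_fenchel_eq hF hT hχ.memLp (L1.integrable_coeFn G),
    hχ.integral_eq_zero G hG]
  ring

theorem IsBoundedAnnihilator.ofReal_sub_tiltedEnergy_le {V : Submodule ℝ (Lp E 1 μ)}
    (hχ : IsBoundedAnnihilator V χ) (hF : LipschitzWith K F) (hT : MemLp T ∞ μ) {G : Lp E 1 μ}
    (hG : G ∈ V) :
    ENNReal.ofReal (F 0 * μ.real univ - tiltedEnergy μ F T G) ≤
      ∫⁻ x, shiftedConj F (T x + χ x) ∂μ := by
  rw [← hχ.integral_fenchel_eq hF hT hG]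
  exact (ofReal_integral_le_lintegral_ofReal _).trans
    (lintegral_mono fun x ↦ ofReal_le_shiftedConj (T x + χ x) (G x))

theorem exists_isBoundedAnnihilator_lintegral_shiftedConj_le [FiniteDimensional ℝ E]
    (hconv : ConvexOn ℝ univ F) (hF : LipschitzWith K F) (hT : MemLp T ∞ μ)
    {V : Submodule ℝ (Lp E 1 μ)} {m : ℝ} (hm : ∀ G ∈ V, m ≤ tiltedEnergy μ F T G) :
    ∃ χ, IsBoundedAnnihilator V χ ∧
      ∫⁻ x, shiftedConj F (T x + χ x) ∂μ ≤ ENNReal.ofReal (F 0 * μ.real univ - m) := by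
  obtain ⟨l, hlV, hl⟩ := exists_dual_affine_minorant (convexOn_tiltedEnergy hconv hF hT)
    (continuous_tiltedEnergy hF hT) hm
  obtain ⟨χ, hχ, hlχ⟩ := exists_memLp_top_forall_eq_integral l
  refine ⟨χ, ⟨hχ, fun G hG ↦ (hlχ G).symm.trans (hlV G hG)⟩,
    lintegral_shiftedConj_add_le hF hT hχ fun G hG ↦ ?_⟩
  have hGχ : ∫ x, χ x (hG.toL1 G x) ∂μ = ∫ x, χ x (G x) ∂μ :=
    integral_congr_ae <| hG.coeFn_toL1.mono fun x hx ↦ congrArg (χ x) hx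
  have hminorant := hl (hG.toL1 G)
  rwa [hlχ, hGχ, tiltedEnergy_congr_ae hG.coeFn_toL1] at hminorant

end Duality

section DualUniqueness

open scoped NNReal

theorem ae_exists_subseq_tendsto_of_integral_norm_le {α X : Type*} [MeasurableSpace α]
    {μ : Measure α} [NormedAddCommGroup X] [ProperSpace X] {D : ℕ → α → X} {B : ℝ}
    (hD : ∀ k, Integrable (D k) μ) (hB : ∀ k, ∫ x, ‖D k x‖ ∂μ ≤ B) :
    ∀ᵐ x ∂μ, ∃ w, ∃ φ : ℕ → ℕ, StrictMono φ ∧ Tendsto (fun k ↦ D (φ k) x) atTop (𝓝 w) := by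
  have hmeas : ∀ k, AEMeasurable (fun x ↦ ‖D k x‖ₑ) μ := fun k ↦ (hD k).1.enorm
  have hfatou : ∫⁻ x, liminf (fun k ↦ ‖D k x‖ₑ) atTop ∂μ ≤ ENNReal.ofReal B := by
    refine (lintegral_liminf_le' hmeas).trans (liminf_le_of_frequently_le' (.of_forall fun k ↦ ?_))
    rw [← ofReal_integral_norm_eq_lintegral_enorm (hD k)]
    exact ENNReal.ofReal_le_ofReal (hB k)
  have hmeas_liminf : AEMeasurable (fun x ↦ liminf (fun k ↦ ‖D k x‖ₑ) atTop) μ := by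
    simp only [liminf_eq_iSup_iInf_of_nat]
    exact .iSup fun k ↦ .biInf _ (to_countable _) fun i _ ↦ hmeas i
  filter_upwards [ae_lt_top' hmeas_liminf (hfatou.trans_lt ENNReal.ofReal_lt_top).ne] with x hx
  obtain ⟨b, hlt, hb⟩ := exists_between hx
  have hfreq : ∃ᶠ k in atTop, D k x ∈ Metric.closedBall 0 b.toReal := by
    refine (frequently_lt_of_liminf_lt (by isBoundedDefault) hlt).mono fun k hk ↦ ?_
    rw [mem_closedBall_zero_iff, ← toReal_enorm]
    exact ENNReal.toReal_mono hb.ne hk.le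
  obtain ⟨w, -, φ, hφ, hw⟩ := tendsto_subseq_of_frequently_bounded Metric.isBounded_closedBall hfreq
  exact ⟨w, φ, hφ, hw⟩

variable {E : Type*} [NormedAddCommGroup E] [NormedSpace ℝ E] {F : E → ℝ} {ℓ : StrongDual ℝ E}

theorem eq_fderiv_of_forall_sub_le {w : E} (hF : DifferentiableAt ℝ F w)
    (hmax : ∀ v, ℓ v - F v ≤ ℓ w - F w) : ℓ = fderiv ℝ F w :=
  sub_eq_zero.1 <| IsLocalMax.hasFDerivAt_eq_zero (.of_forall hmax)
    (ℓ.hasFDerivAt.sub hF.hasFDerivAt)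

/-- The defect `F*(ℓ) + F(w) - ℓ w` in the Fenchel–Young inequality. The value is meaningful only
where `F*(ℓ)` is finite, since `∞.toReal = 0`. -/
noncomputable def fenchelGap (F : E → ℝ) (ℓ : StrongDual ℝ E) (w : E) : ℝ :=
  (shiftedConj F ℓ).toReal - (ℓ w - F w + F 0)

theorem fenchelGap_nonneg (hℓ : shiftedConj F ℓ ≠ ∞) (w : E) : 0 ≤ fenchelGap F ℓ w :=
  sub_nonneg.2 <| (ENNReal.ofReal_le_iff_le_toReal hℓ).1 (ofReal_le_shiftedConj ℓ w)

theorem eq_fderiv_of_tendsto_fenchelGap {ι : Type*} {p : Filter ι} [p.NeBot] {D : ι → E} {w : E}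
    (hF : Differentiable ℝ F) (hℓ : shiftedConj F ℓ ≠ ∞) (hD : Tendsto D p (𝓝 w))
    (hgap : Tendsto (fun k ↦ fenchelGap F ℓ (D k)) p (𝓝 0)) : ℓ = fderiv ℝ F w := by
  have hcont : Continuous (fenchelGap F ℓ) := by
    have := hF.continuous
    unfold fenchelGap
    fun_prop
  have hzero : fenchelGap F ℓ w = 0 := tendsto_nhds_unique ((hcont.tendsto w).comp hD) hgap
  refine eq_fderiv_of_forall_sub_le (hF w) fun v ↦ ?_
  have hnonneg := fenchelGap_nonneg hℓ v
  unfold fenchelGap at hzero hnonneg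
  linarith

variable {α : Type*} [MeasurableSpace α] {μ : Measure α} [IsFiniteMeasure μ] {K : ℝ≥0}

theorem tendstoInMeasure_fenchelGap {z : α → StrongDual ℝ E} {D : ℕ → α → E}
    (hF : LipschitzWith K F) (hz : MemLp z ∞ μ) (hfin : ∫⁻ x, shiftedConj F (z x) ∂μ ≠ ∞)
    (hD : ∀ k, Integrable (D k) μ)
    (hlim : Tendsto (fun k ↦ ∫ x, z x (D k x) - F (D k x) + F 0 ∂μ) atTop
      (𝓝 (∫⁻ x, shiftedConj F (z x) ∂μ).toReal)) :
    TendstoInMeasure μ (fun k x ↦ fenchelGap F (z x) (D k x)) atTop 0 := by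
  have hmeas : AEMeasurable (fun x ↦ shiftedConj F (z x)) μ :=
    (measurable_shiftedConj F).comp_aemeasurable hz.1.aemeasurable
  have hconj : Integrable (fun x ↦ (shiftedConj F (z x)).toReal) μ :=
    integrable_toReal_of_lintegral_ne_top hmeas hfin
  have hae := ae_lt_top' hmeas hfin
  have hint : ∀ k, Integrable (fun x ↦ fenchelGap F (z x) (D k x)) μ := fun k ↦
    hconj.sub (integrable_fenchel hF hz (hD k))
  have hgap : ∀ k, ∫ x, fenchelGap F (z x) (D k x) ∂μ =
      (∫⁻ x, shiftedConj F (z x) ∂μ).toReal - ∫ x, z x (D k x) - F (D k x) + F 0 ∂μ := fun k ↦ by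
    rw [← integral_toReal hmeas hae]
    exact integral_sub hconj (integrable_fenchel hF hz (hD k))
  have hnorm : ∀ k, eLpNorm (fun x ↦ fenchelGap F (z x) (D k x)) 1 μ =
      ENNReal.ofReal (∫ x, fenchelGap F (z x) (D k x) ∂μ) := fun k ↦ by
    rw [eLpNorm_one_eq_lintegral_enorm, ofReal_integral_eq_lintegral_ofReal (hint k)
      (hae.mono fun x hx ↦ fenchelGap_nonneg hx.ne _)]
    exact lintegral_congr_ae <| hae.mono fun x hx ↦
      Real.enorm_of_nonneg (fenchelGap_nonneg hx.ne _)
  refine tendstoInMeasure_of_tendsto_eLpNorm one_ne_zero (fun k ↦ (hint k).1)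
    aestronglyMeasurable_zero ?_
  simpa [hnorm, hgap] using ENNReal.tendsto_ofReal
    (hlim.const_sub (∫⁻ x, shiftedConj F (z x) ∂μ).toReal)

variable [FiniteDimensional ℝ E]

-- Where a subsequence of `D` converges, both functionals are the derivative of `F` at the limit.
theorem ae_eq_of_tendsto_integral_fenchel {z₁ z₂ : α → StrongDual ℝ E} {D : ℕ → α → E} {B : ℝ}
    (hFd : Differentiable ℝ F) (hF : LipschitzWith K F) (hz₁ : MemLp z₁ ∞ μ) (hz₂ : MemLp z₂ ∞ μ)
    (hfin₁ : ∫⁻ x, shiftedConj F (z₁ x) ∂μ ≠ ∞) (hfin₂ : ∫⁻ x, shiftedConj F (z₂ x) ∂μ ≠ ∞)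
    (hD : ∀ k, Integrable (D k) μ) (hB : ∀ k, ∫ x, ‖D k x‖ ∂μ ≤ B)
    (hlim₁ : Tendsto (fun k ↦ ∫ x, z₁ x (D k x) - F (D k x) + F 0 ∂μ) atTop
      (𝓝 (∫⁻ x, shiftedConj F (z₁ x) ∂μ).toReal))
    (hlim₂ : Tendsto (fun k ↦ ∫ x, z₂ x (D k x) - F (D k x) + F 0 ∂μ) atTop
      (𝓝 (∫⁻ x, shiftedConj F (z₂ x) ∂μ).toReal)) :
    z₁ =ᵐ[μ] z₂ := by
  obtain ⟨φ, hφ, hgap₁⟩ :=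
    (tendstoInMeasure_fenchelGap hF hz₁ hfin₁ hD hlim₁).exists_seq_tendsto_ae
  obtain ⟨ψ, hψ, hgap₂⟩ := ((tendstoInMeasure_fenchelGap hF hz₂ hfin₂ hD hlim₂).comp
    hφ.tendsto_atTop).exists_seq_tendsto_ae
  have hae : ∀ {z : α → StrongDual ℝ E}, MemLp z ∞ μ → ∫⁻ x, shiftedConj F (z x) ∂μ ≠ ∞ →
      ∀ᵐ x ∂μ, shiftedConj F (z x) < ∞ := fun hz hfin ↦
    ae_lt_top' ((measurable_shiftedConj F).comp_aemeasurable hz.1.aemeasurable) hfin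
  filter_upwards [hgap₁, hgap₂, hae hz₁ hfin₁, hae hz₂ hfin₂,
    ae_exists_subseq_tendsto_of_integral_norm_le (fun k ↦ hD (φ (ψ k))) fun k ↦ hB (φ (ψ k))]
    with x hx₁ hx₂ hfin₁ hfin₂ ⟨w, θ, hθ, hw⟩
  have hz₁w : z₁ x = fderiv ℝ F w := eq_fderiv_of_tendsto_fenchelGap hFd hfin₁.ne hw <|
    hx₁.comp (hψ.comp hθ).tendsto_atTop
  have hz₂w : z₂ x = fderiv ℝ F w := eq_fderiv_of_tendsto_fenchelGap hFd hfin₂.ne hw <|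
    hx₂.comp hθ.tendsto_atTop
  rw [hz₁w, hz₂w]

end DualUniqueness

section CoerciveDuality

open scoped NNReal

variable {α E : Type*} [MeasurableSpace α] {μ : Measure α} [NormedAddCommGroup E]
  [NormedSpace ℝ E] {F : E → ℝ} {K : ℝ≥0} {T χ : α → StrongDual ℝ E}
  {V : Submodule ℝ (Lp E 1 μ)} {c C : ℝ}

/-- The infimum of `G ↦ ∫ (F(G) - T(G)) dμ` over the subspace `V` of `L¹`; it is meaningful only if
the energy is bounded below on `V`, and `0` otherwise. -/
noncomputable def energyInf (V : Submodule ℝ (Lp E 1 μ)) (F : E → ℝ) (T : α → StrongDual ℝ E) : ℝ :=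
  ⨅ G : V, tiltedEnergy μ F T G.1

theorem energyInf_le (hbdd : BddBelow (range fun G : V ↦ tiltedEnergy μ F T G.1)) :
    energyInf V F T ≤ F 0 * μ.real univ := by
  refine (ciInf_le hbdd 0).trans_eq ((tiltedEnergy_congr_ae (Lp.coeFn_zero E 1 μ)).trans ?_)
  simp [tiltedEnergy, mul_comm]

variable [IsFiniteMeasure μ]

theorem mul_integral_norm_sub_le_tiltedEnergy {G : α → E} (hF : LipschitzWith K F)
    (hT : MemLp T ∞ μ) (hco : ∀ᵐ x ∂μ, ∀ w, c * ‖w‖ - C ≤ F w - T x w) (hG : Integrable G μ) :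
    c * ∫ x, ‖G x‖ ∂μ - C * μ.real univ ≤ tiltedEnergy μ F T G := by
  have hnorm : Integrable (fun x ↦ c * ‖G x‖) μ := hG.norm.const_mul c
  calc c * ∫ x, ‖G x‖ ∂μ - C * μ.real univ = ∫ x, c * ‖G x‖ - C ∂μ := by
        rw [integral_sub hnorm (integrable_const C), integral_const_mul, integral_const,
          smul_eq_mul, mul_comm C]
    _ ≤ tiltedEnergy μ F T G :=
        integral_mono_ae (hnorm.sub (integrable_const C)) (integrable_tiltedEnergy hF hT hG) <|
          hco.mono fun x hx ↦ hx (G x)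

theorem bddBelow_range_tiltedEnergy (hF : LipschitzWith K F) (hT : MemLp T ∞ μ) (hc : 0 < c)
    (hco : ∀ᵐ x ∂μ, ∀ w, c * ‖w‖ - C ≤ F w - T x w) (V : Submodule ℝ (Lp E 1 μ)) :
    BddBelow (range fun G : V ↦ tiltedEnergy μ F T G.1) := by
  refine ⟨-(C * μ.real univ), forall_mem_range.2 fun G ↦ ?_⟩
  have hle := mul_integral_norm_sub_le_tiltedEnergy hF hT hco (L1.integrable_coeFn G.1)
  have hnonneg : 0 ≤ c * ∫ x, ‖G.1 x‖ ∂μ := by positivity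
  linarith

theorem IsBoundedAnnihilator.ofReal_sub_energyInf_le (hχ : IsBoundedAnnihilator V χ)
    (hF : LipschitzWith K F) (hT : MemLp T ∞ μ) :
    ENNReal.ofReal (F 0 * μ.real univ - energyInf V F T) ≤
      ∫⁻ x, shiftedConj F (T x + χ x) ∂μ := by
  by_cases hfin : ∫⁻ x, shiftedConj F (T x + χ x) ∂μ = ∞
  · simp [hfin]
  rw [ENNReal.ofReal_le_iff_le_toReal hfin, sub_le_comm]
  refine le_ciInf fun G ↦ ?_
  rw [sub_le_comm, ← ENNReal.ofReal_le_iff_le_toReal hfin]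
  exact hχ.ofReal_sub_tiltedEnergy_le hF hT G.2

variable [FiniteDimensional ℝ E]

theorem IsBoundedAnnihilator.ae_eq_of_lintegral_shiftedConj_eq {χ₁ χ₂ : α → StrongDual ℝ E}
    (hχ₁ : IsBoundedAnnihilator V χ₁) (hχ₂ : IsBoundedAnnihilator V χ₂) (hFd : Differentiable ℝ F)
    (hF : LipschitzWith K F) (hT : MemLp T ∞ μ) (hc : 0 < c)
    (hco : ∀ᵐ x ∂μ, ∀ w, c * ‖w‖ - C ≤ F w - T x w)
    (hopt₁ : ∫⁻ x, shiftedConj F (T x + χ₁ x) ∂μ =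
      ENNReal.ofReal (F 0 * μ.real univ - energyInf V F T))
    (hopt₂ : ∫⁻ x, shiftedConj F (T x + χ₂ x) ∂μ =
      ENNReal.ofReal (F 0 * μ.real univ - energyInf V F T)) :
    χ₁ =ᵐ[μ] χ₂ := by
  have hbdd := bddBelow_range_tiltedEnergy hF hT hc hco V
  obtain ⟨u, hanti, hlim, hu⟩ := exists_seq_tendsto_sInf (range_nonempty _) hbdd
  choose D hD using hu
  have hDu : ∀ k, tiltedEnergy μ F T (D k).1 = u k := hD
  have hint : ∀ k, Integrable (D k).1 μ := fun k ↦ L1.integrable_coeFn (D k).1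
  have hnorm : ∀ k, ∫ x, ‖(D k).1 x‖ ∂μ ≤ (u 0 + C * μ.real univ) / c := fun k ↦ by
    rw [le_div_iff₀' hc]
    linarith [mul_integral_norm_sub_le_tiltedEnergy hF hT hco (hint k), hDu k, hanti k.zero_le]
  have hmax : ∀ {χ}, IsBoundedAnnihilator V χ → ∫⁻ x, shiftedConj F (T x + χ x) ∂μ =
        ENNReal.ofReal (F 0 * μ.real univ - energyInf V F T) →
      Tendsto (fun k ↦ ∫ x, (T x + χ x) ((D k).1 x) - F ((D k).1 x) + F 0 ∂μ) atTop
        (𝓝 (∫⁻ x, shiftedConj F (T x + χ x) ∂μ).toReal) := fun hχ hopt ↦ by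
    simp only [hχ.integral_fenchel_eq hF hT (D _).2, hDu]
    rw [hopt, ENNReal.toReal_ofReal (sub_nonneg.2 (energyInf_le hbdd))]
    exact hlim.const_sub _
  have hsum := ae_eq_of_tendsto_integral_fenchel hFd hF (memLp_fun_add hT hχ₁.memLp)
    (memLp_fun_add hT hχ₂.memLp) (hopt₁ ▸ ENNReal.ofReal_ne_top) (hopt₂ ▸ ENNReal.ofReal_ne_top)
    hint hnorm (hmax hχ₁ hopt₁) (hmax hχ₂ hopt₂)
  exact hsum.mono fun x ↦ add_left_cancel

theorem exists_isBoundedAnnihilator_lintegral_shiftedConj_eq (hconv : ConvexOn ℝ univ F)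
    (hF : LipschitzWith K F) (hT : MemLp T ∞ μ)
    (hbdd : BddBelow (range fun G : V ↦ tiltedEnergy μ F T G.1)) :
    ∃ χ, IsBoundedAnnihilator V χ ∧ ∫⁻ x, shiftedConj F (T x + χ x) ∂μ =
      ENNReal.ofReal (F 0 * μ.real univ - energyInf V F T) := by
  obtain ⟨χ, hχ, hle⟩ := exists_isBoundedAnnihilator_lintegral_shiftedConj_le hconv hF hT
    fun G hG ↦ ciInf_le hbdd ⟨G, hG⟩
  exact ⟨χ, hχ, hle.antisymm (hχ.ofReal_sub_energyInf_le hF hT)⟩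

end CoerciveDuality

section FrobeniusPairing

open scoped NNReal

variable {ι κ : Type*} [Fintype ι] [Fintype κ] {F Finf : (ι → κ → ℝ) → ℝ}

/-- The matrices `ℝ^{ι×κ}` (with their sup norm) identified with Euclidean space, so that `mnorm`
and `mdot` become its norm and inner product. -/
noncomputable def matrixEuclideanEquiv (ι κ : Type*) [Fintype ι] [Fintype κ] :
    (ι → κ → ℝ) ≃L[ℝ] EuclideanSpace ℝ (ι × κ) :=
  ((LinearEquiv.curry ℝ ℝ ι κ).symm ≪≫ₗ
    (WithLp.linearEquiv 2 ℝ (ι × κ → ℝ)).symm).toContinuousLinearEquiv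

theorem inner_matrixEuclideanEquiv (A B : ι → κ → ℝ) :
    ⟪matrixEuclideanEquiv ι κ A, matrixEuclideanEquiv ι κ B⟫ = mdot A B := by
  simp [matrixEuclideanEquiv, mdot, PiLp.inner_apply, Fintype.sum_prod_type, mul_comm]

theorem norm_matrixEuclideanEquiv (A : ι → κ → ℝ) : ‖matrixEuclideanEquiv ι κ A‖ = mnorm A := by
  rw [norm_eq_sqrt_real_inner, inner_matrixEuclideanEquiv, mnorm]

theorem mnorm_le_mul_norm (A : ι → κ → ℝ) :
    mnorm A ≤ ‖(matrixEuclideanEquiv ι κ : (ι → κ → ℝ) →L[ℝ] EuclideanSpace ℝ (ι × κ))‖ * ‖A‖ := by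
  rw [← norm_matrixEuclideanEquiv]
  exact (matrixEuclideanEquiv ι κ : (ι → κ → ℝ) →L[ℝ] EuclideanSpace ℝ (ι × κ)).le_opNorm A

theorem norm_le_mul_mnorm (A : ι → κ → ℝ) :
    ‖A‖ ≤ ‖((matrixEuclideanEquiv ι κ).symm : EuclideanSpace ℝ (ι × κ) →L[ℝ] (ι → κ → ℝ))‖ *
      mnorm A := by
  have hle := ((matrixEuclideanEquiv ι κ).symm :
    EuclideanSpace ℝ (ι × κ) →L[ℝ] (ι → κ → ℝ)).le_opNorm (matrixEuclideanEquiv ι κ A)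
  simpa [norm_matrixEuclideanEquiv] using hle

/-- The isomorphism of `ℝ^{ι×κ}` with its dual given by the Frobenius inner product, i.e. the Riesz
isomorphism of Euclidean space conjugated with `matrixEuclideanEquiv`. -/
noncomputable def mdotEquiv (ι κ : Type*) [Fintype ι] [Fintype κ] :
    (ι → κ → ℝ) ≃L[ℝ] StrongDual ℝ (ι → κ → ℝ) :=
  ((matrixEuclideanEquiv ι κ).trans
    (InnerProductSpace.toDual ℝ (EuclideanSpace ℝ (ι × κ))).toContinuousLinearEquiv).trans
    ((matrixEuclideanEquiv ι κ).symm.arrowCongr (ContinuousLinearEquiv.refl ℝ ℝ))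

theorem mdotEquiv_apply (A B : ι → κ → ℝ) : mdotEquiv ι κ A B = mdot A B := by
  rw [← inner_matrixEuclideanEquiv]
  rfl

/-- The matrix field `T` as a field of linear functionals `mdot (T x)`. -/
noncomputable def mdotField {α : Type*} (T : α → ι → κ → ℝ) (x : α) : StrongDual ℝ (ι → κ → ℝ) :=
  mdotEquiv ι κ (T x)

theorem mdotField_apply {α : Type*} (T : α → ι → κ → ℝ) (x : α) (A : ι → κ → ℝ) :
    mdotField T x A = mdot (T x) A :=
  mdotEquiv_apply (T x) A

section MdotField

variable {α : Type*} [MeasurableSpace α] {μ : Measure α} {T : α → ι → κ → ℝ}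

theorem aestronglyMeasurable_mdotField (hT : AEStronglyMeasurable T μ) :
    AEStronglyMeasurable (mdotField T) μ :=
  (mdotEquiv ι κ).continuous.comp_aestronglyMeasurable hT

theorem memLp_top_mdotField (hT : AEStronglyMeasurable T μ) {C : ℝ}
    (hC : ∀ᵐ x ∂μ, mnorm (T x) ≤ C) : MemLp (mdotField T) ∞ μ := by
  set Ψ := (mdotEquiv ι κ : (ι → κ → ℝ) →L[ℝ] StrongDual ℝ (ι → κ → ℝ))
  set Φ := ((matrixEuclideanEquiv ι κ).symm : EuclideanSpace ℝ (ι × κ) →L[ℝ] (ι → κ → ℝ))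
  refine memLp_top_of_bound (aestronglyMeasurable_mdotField hT) (‖Ψ‖ * (‖Φ‖ * C)) ?_
  filter_upwards [hC] with x hx
  calc ‖mdotField T x‖ ≤ ‖Ψ‖ * ‖T x‖ := Ψ.le_opNorm (T x)
    _ ≤ ‖Ψ‖ * (‖Φ‖ * mnorm (T x)) := by gcongr; exact norm_le_mul_mnorm (T x)
    _ ≤ ‖Ψ‖ * (‖Φ‖ * C) := by gcongr

end MdotField

theorem mnorm_smul (r : ℝ) (A : ι → κ → ℝ) : mnorm (r • A) = |r| * mnorm A := by
  rw [← norm_matrixEuclideanEquiv, map_smul, norm_smul, norm_matrixEuclideanEquiv, Real.norm_eq_abs]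

theorem mnorm_pos {A : ι → κ → ℝ} (hA : A ≠ 0) : 0 < mnorm A := by
  rw [← norm_matrixEuclideanEquiv]
  exact norm_pos_iff.2 ((map_ne_zero_iff _ (matrixEuclideanEquiv ι κ).injective).2 hA)

theorem exists_lipschitzWith_of_convexOn_of_le_mul_one_add_mnorm (hF : ConvexOn ℝ univ F) {L : ℝ}
    (hgrowth : ∀ z, F z ≤ L * (1 + mnorm z)) : ∃ K, LipschitzWith K F := by
  let Φ := (matrixEuclideanEquiv ι κ : (ι → κ → ℝ) →L[ℝ] EuclideanSpace ℝ (ι × κ))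
  refine ⟨‖L‖₊ * ‖Φ‖₊,
    lipschitzWith_of_convexOn_of_le_add_mul_norm hF (a := L) fun z ↦ (hgrowth z).trans ?_⟩
  have hmnorm : mnorm z ≤ ‖Φ‖ * ‖z‖ := mnorm_le_mul_norm z
  calc L * (1 + mnorm z) = L + L * mnorm z := by ring
    _ ≤ L + ‖L‖ * (‖Φ‖ * ‖z‖) :=
      add_le_add_right (mul_le_mul (le_abs_self L) hmnorm (Real.sqrt_nonneg _) (norm_nonneg L)) L
    _ = L + (‖L‖₊ * ‖Φ‖₊ : ℝ≥0) * ‖z‖ := by rw [NNReal.coe_mul, coe_nnnorm, coe_nnnorm, mul_assoc]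

theorem IsRecessionFunction.mul_mnorm_le_of_forall_mnorm_eq_one (h : IsRecessionFunction F Finf)
    {δ : ℝ} {ℓ : StrongDual ℝ (ι → κ → ℝ)} (hℓ : ∀ ξ, mnorm ξ = 1 → δ ≤ Finf ξ - ℓ ξ)
    (ξ : ι → κ → ℝ) : δ * mnorm ξ ≤ Finf ξ - ℓ ξ := by
  rcases eq_or_ne ξ 0 with rfl | hξ
  · simp [h.map_zero, mnorm, mdot]
  have hpos := mnorm_pos hξ
  have hunit := hℓ ((mnorm ξ)⁻¹ • ξ) <| by
    rw [mnorm_smul, abs_inv, abs_of_pos hpos, inv_mul_cancel₀ hpos.ne']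
  rw [h.map_smul (inv_pos.2 hpos), ContinuousLinearMap.map_smul, smul_eq_mul, ← mul_sub,
    inv_mul_eq_div, le_div_iff₀ hpos] at hunit
  exact hunit

theorem IsRecessionFunction.exists_forall_mul_norm_le (h : IsRecessionFunction F Finf) {δ : ℝ}
    (hδ : 0 < δ) : ∃ c > 0, ∀ ℓ : StrongDual ℝ (ι → κ → ℝ),
      (∀ ξ, mnorm ξ = 1 → δ ≤ Finf ξ - ℓ ξ) → ∀ ξ, c * ‖ξ‖ ≤ Finf ξ - ℓ ξ := by
  set C := ‖((matrixEuclideanEquiv ι κ).symm : EuclideanSpace ℝ (ι × κ) →L[ℝ] (ι → κ → ℝ))‖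
  have hC : 0 < C + 1 := by positivity
  refine ⟨δ / (C + 1), by positivity, fun ℓ hℓ ξ ↦ ?_⟩
  have hnorm : ‖ξ‖ ≤ (C + 1) * mnorm ξ :=
    (norm_le_mul_mnorm ξ).trans
      (mul_le_mul_of_nonneg_right (le_add_of_nonneg_right zero_le_one) (Real.sqrt_nonneg _))
  calc δ / (C + 1) * ‖ξ‖ ≤ δ / (C + 1) * ((C + 1) * mnorm ξ) := by gcongr
    _ = δ * mnorm ξ := by field_simp
    _ ≤ Finf ξ - ℓ ξ := h.mul_mnorm_le_of_forall_mnorm_eq_one hℓ ξ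

theorem IsRecessionFunction.exists_ae_mul_norm_le_sub_mdotField (h : IsRecessionFunction F Finf)
    {α : Type*} [MeasurableSpace α] {μ : Measure α} {T : α → ι → κ → ℝ}
    (hcoerc : ∃ δ : ℝ, 0 < δ ∧ ∀ᵐ x ∂μ, ∀ ξ, mnorm ξ = 1 → δ ≤ Finf ξ - mdot (T x) ξ) :
    ∃ c > 0, ∀ᵐ x ∂μ, ∀ ξ, c * ‖ξ‖ ≤ Finf ξ - mdotField T x ξ := by
  obtain ⟨δ, hδ, hle⟩ := hcoerc
  obtain ⟨c, hc, hcle⟩ := h.exists_forall_mul_norm_le hδ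
  exact ⟨c, hc, hle.mono fun x hx ↦ hcle (mdotField T x) (by simpa only [mdotField_apply] using hx)⟩

end FrobeniusPairing

section WeakGradient

variable {n : ℕ} {ι : Type*} [Fintype ι] {Ω : Set (EVec n)} {u v : EVec n → ι → ℝ}
  {Du Dv : EVec n → ι → Fin n → ℝ}

namespace HasWeakDerivOn

theorem integrable_mul_fderiv (h : HasWeakDerivOn Ω u Du) {φ : EVec n → ℝ} (hφ : ContDiff ℝ 1 φ)
    (hsupp : HasCompactSupport φ) (a : ι) (e : EVec n) :
    Integrable (fun x ↦ u x a * fderiv ℝ φ x e) (volume.restrict Ω) := by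
  have hcont : Continuous fun x ↦ fderiv ℝ φ x e :=
    (hφ.continuous_fderiv one_ne_zero).clm_apply continuous_const
  obtain ⟨C, hC⟩ := hcont.bounded_above_of_compact_support (hsupp.fderiv_apply ℝ e)
  exact (h.1.eval a).mul_bdd hcont.aestronglyMeasurable (.of_forall hC)

theorem integrable_gradient_mul (h : HasWeakDerivOn Ω u Du) {φ : EVec n → ℝ} (hφ : Continuous φ)
    (hsupp : HasCompactSupport φ) (a : ι) (i : Fin n) :
    Integrable (fun x ↦ Du x a i * φ x) (volume.restrict Ω) := by
  obtain ⟨C, hC⟩ := hφ.bounded_above_of_compact_support hsupp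
  exact ((h.2.1.eval a).eval i).mul_bdd hφ.aestronglyMeasurable (.of_forall hC)

theorem zero (Ω : Set (EVec n)) :
    HasWeakDerivOn Ω (0 : EVec n → ι → ℝ) (0 : EVec n → ι → Fin n → ℝ) :=
  ⟨integrableOn_zero, integrableOn_zero, by simp⟩

theorem add (hu : HasWeakDerivOn Ω u Du) (hv : HasWeakDerivOn Ω v Dv) :
    HasWeakDerivOn Ω (u + v) (Du + Dv) := by
  refine ⟨hu.1.add hv.1, hu.2.1.add hv.2.1, fun φ hφ hsupp hΩ a i ↦ ?_⟩
  simp only [Pi.add_apply, add_mul]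
  rw [integral_add (hu.integrable_mul_fderiv hφ hsupp a _) (hv.integrable_mul_fderiv hφ hsupp a _),
    integral_add (hu.integrable_gradient_mul hφ.continuous hsupp a i)
      (hv.integrable_gradient_mul hφ.continuous hsupp a i),
    hu.2.2 φ hφ hsupp hΩ a i, hv.2.2 φ hφ hsupp hΩ a i, neg_add]

theorem const_smul (hu : HasWeakDerivOn Ω u Du) (c : ℝ) : HasWeakDerivOn Ω (c • u) (c • Du) := by
  refine ⟨hu.1.smul c, hu.2.1.smul c, fun φ hφ hsupp hΩ a i ↦ ?_⟩
  simp only [Pi.smul_apply, smul_eq_mul, mul_assoc]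
  rw [integral_const_mul, integral_const_mul, hu.2.2 φ hφ hsupp hΩ a i, mul_neg]

end HasWeakDerivOn

/-- The subspace `{∇w : w ∈ W^{1,1}(Ω;ℝ^ι)}` of `L¹(Ω;ℝ^{ι×n})`. -/
def weakGradientSpace (ι : Type*) [Fintype ι] (Ω : Set (EVec n)) :
    Submodule ℝ (Lp (ι → Fin n → ℝ) 1 (volume.restrict Ω)) where
  carrier := {G | ∃ w Dw, HasWeakDerivOn Ω w Dw ∧ G =ᵐ[volume.restrict Ω] Dw}
  zero_mem' := ⟨0, 0, .zero Ω, Lp.coeFn_zero _ _ _⟩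
  add_mem' := by
    rintro G H ⟨w, Dw, hw, hG⟩ ⟨v, Dv, hv, hH⟩
    exact ⟨w + v, Dw + Dv, hw.add hv, (Lp.coeFn_add G H).trans (hG.add hH)⟩
  smul_mem' := by
    rintro c G ⟨w, Dw, hw, hG⟩
    exact ⟨c • w, c • Dw, hw.const_smul c, (Lp.coeFn_smul c G).trans (hG.const_smul c)⟩

theorem HasWeakDerivOn.toL1_mem_weakGradientSpace (h : HasWeakDerivOn Ω u Du) :
    Integrable.toL1 Du h.2.1 ∈ weakGradientSpace ι Ω :=
  ⟨u, Du, h, h.2.1.coeFn_toL1⟩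

end WeakGradient

theorem coe_sub_coe_ennreal_eq_coe_iff {a m : ℝ} (hma : m ≤ a) {I : ℝ≥0∞} :
    (a : EReal) - (I : EReal) = (m : EReal) ↔ I = ENNReal.ofReal (a - m) := by
  induction I with
  | top => simp
  | coe I =>
    rw [← EReal.coe_ennreal_toReal ENNReal.coe_ne_top, ← EReal.coe_sub, EReal.coe_eq_coe_iff,
      ENNReal.coe_toReal, ENNReal.ofReal, ENNReal.coe_inj, ← NNReal.coe_inj,
      Real.coe_toNNReal _ (sub_nonneg.2 hma), sub_eq_iff_comm, eq_comm]

theorem coe_sub_coe_ennreal_le_coe_of_ofReal_le {a m : ℝ} {I : ℝ≥0∞}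
    (hI : ENNReal.ofReal (a - m) ≤ I) : (a : EReal) - (I : EReal) ≤ (m : EReal) := by
  induction I with
  | top => simp
  | coe I =>
    rw [ENNReal.ofReal_le_iff_le_toReal ENNReal.coe_ne_top] at hI
    rw [← EReal.coe_ennreal_toReal ENNReal.coe_ne_top, ← EReal.coe_sub, EReal.coe_le_coe_iff]
    linarith

section NeumannDuality

open scoped NNReal

variable {n N : ℕ} {Ω : Set (EVec n)} {F : (Fin N → Fin n → ℝ) → ℝ}
  {T₀ χ : EVec n → Fin N → Fin n → ℝ}

theorem FFgen_eq_tiltedEnergy (Ω : Set (EVec n)) (F : (Fin N → Fin n → ℝ) → ℝ)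
    (T₀ Dw : EVec n → Fin N → Fin n → ℝ) :
    FFgen Ω F T₀ Dw = tiltedEnergy (volume.restrict Ω) F (mdotField T₀) Dw := by
  simp only [FFgen, tiltedEnergy, mdotField_apply]

theorem sInf_FFgen_eq_energyInf (Ω : Set (EVec n)) (F : (Fin N → Fin n → ℝ) → ℝ)
    (T₀ : EVec n → Fin N → Fin n → ℝ) :
    sInf {r : ℝ | ∃ (w : EVec n → Fin N → ℝ) (Dw : EVec n → Fin N → Fin n → ℝ),
      HasWeakDerivOn Ω w Dw ∧ r = FFgen Ω F T₀ Dw} =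
    energyInf (weakGradientSpace (Fin N) Ω) F (mdotField T₀) := by
  refine congrArg sInf (Set.ext fun r ↦ ⟨?_, ?_⟩)
  · rintro ⟨w, Dw, hw, rfl⟩
    refine ⟨⟨_, hw.toL1_mem_weakGradientSpace⟩, ?_⟩
    rw [FFgen_eq_tiltedEnergy]
    exact tiltedEnergy_congr_ae hw.2.1.coeFn_toL1
  · rintro ⟨⟨G, w, Dw, hw, hG⟩, rfl⟩
    exact ⟨w, Dw, hw, (tiltedEnergy_congr_ae hG).trans (FFgen_eq_tiltedEnergy Ω F T₀ Dw).symm⟩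

theorem Rdual_eq_sub_lintegral_shiftedConj (Ω : Set (EVec n)) (F : (Fin N → Fin n → ℝ) → ℝ)
    (T₀ χ : EVec n → Fin N → Fin n → ℝ) :
    Rdual Ω F T₀ χ = ((F 0 * (volume.restrict Ω).real univ : ℝ) : EReal) -
      ((∫⁻ x in Ω, shiftedConj F (mdotField T₀ x + mdotField χ x) : ℝ≥0∞) : EReal) := by
  simp only [Rdual, FstarShift, shiftedConj, mdotField, ← map_add, mdotEquiv_apply, Measure.real,
    Measure.restrict_apply_univ]

theorem MemLinfPerp.isBoundedAnnihilator (hΩ : MeasurableSet Ω) (hχ : MemLinfPerp Ω χ) :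
    IsBoundedAnnihilator (weakGradientSpace (Fin N) Ω) (mdotField χ) where
  memLp := by
    obtain ⟨hmeas, ⟨C, hC⟩, -⟩ := hχ
    exact memLp_top_mdotField hmeas ((ae_restrict_mem hΩ).mono hC)
  integral_eq_zero := by
    rintro G ⟨w, Dw, hw, hG⟩
    rw [← hχ.2.2 w Dw hw]
    refine integral_congr_ae (hG.mono fun x hx ↦ ?_)
    simp only [hx, mdotField_apply]

theorem IsBoundedAnnihilator.exists_memLinfPerp_mdotField_ae_eq
    {ψ : EVec n → StrongDual ℝ (Fin N → Fin n → ℝ)}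
    (hψ : IsBoundedAnnihilator (weakGradientSpace (Fin N) Ω) ψ) :
    ∃ χ, MemLinfPerp Ω χ ∧ mdotField χ =ᵐ[volume.restrict Ω] ψ := by
  set Ψ := mdotEquiv (Fin N) (Fin n)
  obtain ⟨g, C, hg, hC, hgψ⟩ := exists_stronglyMeasurable_norm_le_ae_eq_of_memLp_top
    ((Ψ.symm : _ →L[ℝ] (Fin N → Fin n → ℝ)).comp_memLp' hψ.memLp)
  have hfield : mdotField g =ᵐ[volume.restrict Ω] ψ :=
    hgψ.mono fun x hx ↦ (congrArg Ψ hx).trans (Ψ.apply_symm_apply (ψ x))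
  refine ⟨g, ⟨hg.aestronglyMeasurable, ⟨_, fun x _ ↦ (mnorm_le_mul_norm (g x)).trans
    (mul_le_mul_of_nonneg_left (hC x) (norm_nonneg _))⟩, fun w Dw hw ↦ ?_⟩, hfield⟩
  rw [← hψ.integral_eq_zero _ hw.toL1_mem_weakGradientSpace]
  refine integral_congr_ae ?_
  filter_upwards [hfield, hw.2.1.coeFn_toL1] with x hx hDw
  rw [hDw, ← hx, mdotField_apply]

theorem Rdual_eq_energyInf_iff
    (hbdd : BddBelow (range fun G : weakGradientSpace (Fin N) Ω ↦
      tiltedEnergy (volume.restrict Ω) F (mdotField T₀) G.1)) :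
    Rdual Ω F T₀ χ = (energyInf (weakGradientSpace (Fin N) Ω) F (mdotField T₀) : EReal) ↔
      ∫⁻ x in Ω, shiftedConj F (mdotField T₀ x + mdotField χ x) =
        ENNReal.ofReal (F 0 * (volume.restrict Ω).real univ -
          energyInf (weakGradientSpace (Fin N) Ω) F (mdotField T₀)) := by
  rw [Rdual_eq_sub_lintegral_shiftedConj,
    coe_sub_coe_ennreal_eq_coe_iff (energyInf_le hbdd)]

theorem MemLinfPerp.Rdual_le_energyInf [IsFiniteMeasure (volume.restrict Ω)] {K : ℝ≥0}
    (hΩ : MeasurableSet Ω) (hχ : MemLinfPerp Ω χ) (hF : LipschitzWith K F)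
    (hT : MemLp (mdotField T₀) ∞ (volume.restrict Ω)) :
    Rdual Ω F T₀ χ ≤ (energyInf (weakGradientSpace (Fin N) Ω) F (mdotField T₀) : EReal) := by
  rw [Rdual_eq_sub_lintegral_shiftedConj]
  exact coe_sub_coe_ennreal_le_coe_of_ofReal_le
    ((hχ.isBoundedAnnihilator hΩ).ofReal_sub_energyInf_le hF hT)

theorem MemLinfPerp.ae_eq_of_Rdual_eq_energyInf [IsFiniteMeasure (volume.restrict Ω)] {K : ℝ≥0}
    {c C : ℝ} {σ : EVec n → Fin N → Fin n → ℝ} (hΩ : MeasurableSet Ω) (hχ : MemLinfPerp Ω χ)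
    (hσ : MemLinfPerp Ω σ) (hFd : Differentiable ℝ F) (hF : LipschitzWith K F)
    (hT : MemLp (mdotField T₀) ∞ (volume.restrict Ω)) (hc : 0 < c)
    (hco : ∀ᵐ x ∂(volume.restrict Ω), ∀ w, c * ‖w‖ - C ≤ F w - mdotField T₀ x w)
    (hχopt : Rdual Ω F T₀ χ = (energyInf (weakGradientSpace (Fin N) Ω) F (mdotField T₀) : EReal))
    (hσopt : Rdual Ω F T₀ σ = (energyInf (weakGradientSpace (Fin N) Ω) F (mdotField T₀) : EReal)) :
    χ =ᵐ[volume.restrict Ω] σ := by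
  have hbdd := bddBelow_range_tiltedEnergy hF hT hc hco (weakGradientSpace (Fin N) Ω)
  have hfield := (hχ.isBoundedAnnihilator hΩ).ae_eq_of_lintegral_shiftedConj_eq
    (hσ.isBoundedAnnihilator hΩ) hFd hF hT hc hco
    ((Rdual_eq_energyInf_iff hbdd).1 hχopt) ((Rdual_eq_energyInf_iff hbdd).1 hσopt)
  exact hfield.mono fun x hx ↦ (mdotEquiv (Fin N) (Fin n)).injective hx

theorem exists_memLinfPerp_Rdual_eq_energyInf [IsFiniteMeasure (volume.restrict Ω)] {K : ℝ≥0}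
    (hconv : ConvexOn ℝ univ F) (hF : LipschitzWith K F)
    (hT : MemLp (mdotField T₀) ∞ (volume.restrict Ω))
    (hbdd : BddBelow (range fun G : weakGradientSpace (Fin N) Ω ↦
      tiltedEnergy (volume.restrict Ω) F (mdotField T₀) G.1)) :
    ∃ σ, MemLinfPerp Ω σ ∧
      Rdual Ω F T₀ σ = (energyInf (weakGradientSpace (Fin N) Ω) F (mdotField T₀) : EReal) := by
  obtain ⟨ψ, hψ, hopt⟩ := exists_isBoundedAnnihilator_lintegral_shiftedConj_eq hconv hF hT hbdd
  obtain ⟨σ, hσ, hσψ⟩ := hψ.exists_memLinfPerp_mdotField_ae_eq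
  refine ⟨σ, hσ, (Rdual_eq_energyInf_iff hbdd).2 ?_⟩
  rw [← hopt]
  exact lintegral_congr_ae (hσψ.mono fun x hx ↦ by simp only [hx])

theorem duality_correspondence_general {Finf : (Fin N → Fin n → ℝ) → ℝ} {L : ℝ}
    (hΩ : MeasurableSet Ω) (hΩfin : volume Ω ≠ ∞) (hFd : Differentiable ℝ F)
    (hFconv : ConvexOn ℝ univ F) (hFgrowth : ∀ z, F z ≤ L * (1 + mnorm z))
    (hFinf : IsRecessionFunction F Finf) (hTmeas : AEStronglyMeasurable T₀ (volume.restrict Ω))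
    (hcoerc : ∃ δ₀ : ℝ, 0 < δ₀ ∧ ∀ᵐ x ∂(volume.restrict Ω),
      ∀ ξ : Fin N → Fin n → ℝ, mnorm ξ = 1 → δ₀ ≤ Finf ξ - mdot (T₀ x) ξ) :
    (⨆ χ : {χ : EVec n → Fin N → Fin n → ℝ // MemLinfPerp Ω χ}, Rdual Ω F T₀ χ.1) =
      ((sInf {r : ℝ | ∃ (w : EVec n → Fin N → ℝ) (Dw : EVec n → Fin N → Fin n → ℝ),
        HasWeakDerivOn Ω w Dw ∧ r = FFgen Ω F T₀ Dw} : ℝ) : EReal) ∧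
    ∃ σ : EVec n → Fin N → Fin n → ℝ, MemLinfPerp Ω σ ∧
      (∀ χ : EVec n → Fin N → Fin n → ℝ, MemLinfPerp Ω χ → Rdual Ω F T₀ χ ≤ Rdual Ω F T₀ σ) ∧
      (∀ χ : EVec n → Fin N → Fin n → ℝ, MemLinfPerp Ω χ →
        Rdual Ω F T₀ χ = Rdual Ω F T₀ σ → χ =ᵐ[volume.restrict Ω] σ) := by
  have : IsFiniteMeasure (volume.restrict Ω) := isFiniteMeasure_restrict.2 hΩfin
  obtain ⟨K, hF⟩ := exists_lipschitzWith_of_convexOn_of_le_mul_one_add_mnorm hFconv hFgrowth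
  obtain ⟨c, hc, hrec⟩ := hFinf.exists_ae_mul_norm_le_sub_mdotField hcoerc
  have hT := hFinf.memLp_top_of_ae_forall_apply_le hF (aestronglyMeasurable_mdotField hTmeas)
    (hrec.mono fun x hx ξ ↦ sub_nonneg.1 ((mul_nonneg hc.le (norm_nonneg ξ)).trans (hx ξ)))
  obtain ⟨C, hC⟩ := hFinf.exists_forall_mul_norm_sub_le hF hc
  have hco := hrec.mono fun x ↦ hC (mdotField T₀ x)
  obtain ⟨σ, hσ, hσopt⟩ := exists_memLinfPerp_Rdual_eq_energyInf hFconv hF hT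
    (bddBelow_range_tiltedEnergy hF hT (half_pos hc) hco (weakGradientSpace (Fin N) Ω))
  have hmax : ∀ χ, MemLinfPerp Ω χ → Rdual Ω F T₀ χ ≤ Rdual Ω F T₀ σ := fun χ hχ ↦
    hσopt ▸ hχ.Rdual_le_energyInf hΩ hF hT
  rw [sInf_FFgen_eq_energyInf, ← hσopt]
  exact ⟨le_antisymm (iSup_le fun χ ↦ hmax χ.1 χ.2)
      (le_iSup (fun χ : {χ // MemLinfPerp Ω χ} ↦ Rdual Ω F T₀ χ.1) ⟨σ, hσ⟩),
    σ, hσ, hmax, fun χ hχ heq ↦ hχ.ae_eq_of_Rdual_eq_energyInf hΩ hσ hFd hF hT (half_pos hc) hco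
      (heq.trans hσopt) hσopt⟩

end NeumannDuality

/-- **Remark 4.12 (duality correspondence).** Under the coerciveness condition,
`inf_{w∈W^{1,1}(Ω;ℝ^N)} ∫_Ω (F(∇w) − T₀·∇w) dx
  = sup_{χ∈L^∞_⊥(Ω;ℝ^{N×n})} (−∫_Ω F*(T₀+χ) dx)`,
and the dual problem admits a unique solution. -/
theorem duality_correspondence
    {n N : ℕ} (Ω : Set (EVec n))
    (hΩ : IsLipschitzDomain Ω) (hΩbdd : Bornology.IsBounded Ω)
    (ν L : ℝ) (hν : 0 < ν) (hνL : ν ≤ L)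
    (F : (Fin N → Fin n → ℝ) → ℝ)
    (hFpos : ∀ z, 0 ≤ F z)
    (hFC1 : ContDiff ℝ 1 F)
    (hFconv : ConvexOn ℝ Set.univ F)
    (hFgrowth : ∀ z, ν * mnorm z - L ≤ F z ∧ F z ≤ L * (1 + mnorm z))
    (Finf : (Fin N → Fin n → ℝ) → ℝ)
    (hFinf : ∀ z, Filter.Tendsto (fun t : ℝ => t * F (t⁻¹ • z))
      (nhdsWithin 0 (Set.Ioi 0)) (nhds (Finf z)))
    (T₀ : EVec n → Fin N → Fin n → ℝ)
    (hTmeas : AEStronglyMeasurable T₀ (volume.restrict Ω))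
    (hTbdd : ∃ M : ℝ, ∀ x ∈ Ω, mnorm (T₀ x) ≤ M)
    -- coerciveness: `ess inf_{x∈Ω} min_{|ξ|=1} (F^∞(ξ) − T₀(x)·ξ) > 0`
    (hcoerc : ∃ δ₀ : ℝ, 0 < δ₀ ∧ ∀ᵐ x ∂(volume.restrict Ω),
      ∀ ξ : Fin N → Fin n → ℝ, mnorm ξ = 1 → δ₀ ≤ Finf ξ - mdot (T₀ x) ξ) :
    (⨆ χ : {χ : EVec n → Fin N → Fin n → ℝ // MemLinfPerp Ω χ},
        Rdual Ω F T₀ χ.1) =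
      ((sInf {r : ℝ | ∃ (w : EVec n → Fin N → ℝ)
        (Dw : EVec n → Fin N → Fin n → ℝ),
        HasWeakDerivOn Ω w Dw ∧ r = FFgen Ω F T₀ Dw} : ℝ) : EReal) ∧
    ∃ σ : EVec n → Fin N → Fin n → ℝ, MemLinfPerp Ω σ ∧
      (∀ χ : EVec n → Fin N → Fin n → ℝ, MemLinfPerp Ω χ →
        Rdual Ω F T₀ χ ≤ Rdual Ω F T₀ σ) ∧
      (∀ χ : EVec n → Fin N → Fin n → ℝ, MemLinfPerp Ω χ →
        Rdual Ω F T₀ χ = Rdual Ω F T₀ σ → χ =ᵐ[volume.restrict Ω] σ) := by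
  exact duality_correspondence_general hΩ.1.measurableSet hΩbdd.measure_lt_top.ne
    (hFC1.differentiable one_ne_zero) hFconv (fun z ↦ (hFgrowth z).2) hFinf hTmeas hcoerc
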